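/- arXiv:1203.4925 — 14 statements merged into one kernel-verified Lean document; each statement's English description precedes it below -/
import Mathlib

section
/- Suppose char K ≠ 2 and let Θ : Λ → Λ be a Jordan derivation. Then for every x ∈ Λ one has f*Θ(e*x*e)*f = 0, e*Θ(f*x*f)*e = 0, e*Θ(e*x*f)*e = 0, and f*Θ(e*x*f)*f = 0 (a Jordan derivation of a triangular algebra maps each corner into that corner plus the bimodule, and maps the bimodule into itself). -/
set_option synthInstance.maxHeartbeats 1000000
set_option maxHeartbeats 1000000

/-!
Write `f = 1 - e`. A corner element `a` satisfies `a ∘ p = 0` in the Jordan product, `p` being the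
opposite idempotent; applying `Θ` and compressing by `p` on both sides leaves `2 • (p Θ(a) p) = 0`,
and `2` is invertible. A bimodule element `m = e m f` satisfies `m = e ∘ m`; applying `Θ` to this
and compressing by `e` (resp. `f`), the terms involving `Θ e` contain a factor `f y e`, which vanishes
by triangularity, so what is left is `e Θ(m) e = 2 • e Θ(m) e` (resp. `f Θ(m) f = 0`).
-/

/-- A Jordan derivation maps the two-sided annihilator of an idempotent `p` into elements with
zero compression to `p`. -/
theorem jordan_compression_eq_zero
    {K : Type*} [Field K] {Λ : Type*} [Ring Λ] [Algebra K Λ] (h2 : (2 : K) ≠ 0)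
    (Θ : Λ →ₗ[K] Λ)
    (hJ : ∀ x y : Λ, Θ (x * y + y * x) = Θ x * y + y * Θ x + x * Θ y + Θ y * x)
    {p a : Λ} (hp : p * p = p) (hpa : p * a = 0) (hap : a * p = 0) :
    p * Θ a * p = 0 := by
  have h := congrArg (fun z => p * z * p) (hJ a p)
  have h1 : p * (Θ a * p + p * Θ a + a * Θ p + Θ p * a) * p
      = p * Θ a * (p * p) + (p * p) * Θ a * p + (p * a) * Θ p * p + p * Θ p * (a * p) := by
    noncomm_ring
  simp only [h1, hp, hpa, hap, add_zero, map_zero, mul_zero, zero_mul] at h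
  have h3 : (2 : K) • (p * Θ a * p) = 0 := by rw [two_smul, ← h]
  exact (smul_eq_zero_iff_right h2).1 h3

theorem jordan_derivation_corner_components
    {K : Type*} [Field K] {Λ : Type*} [Ring Λ] [Algebra K Λ]
    (hchar : ringChar K ≠ 2)
    (e : Λ) (he : e * e = e)
    (htri : ∀ x : Λ, (1 - e) * x * e = 0)
    (Θ : Λ →ₗ[K] Λ)
    (hJ : ∀ x y : Λ, Θ (x * y + y * x) = Θ x * y + y * Θ x + x * Θ y + Θ y * x) :
    ∀ x : Λ,
      (1 - e) * Θ (e * x * e) * (1 - e) = 0 ∧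
      e * Θ ((1 - e) * x * (1 - e)) * e = 0 ∧
      e * Θ (e * x * (1 - e)) * e = 0 ∧
      (1 - e) * Θ (e * x * (1 - e)) * (1 - e) = 0 := by
  have h2 : (2 : K) ≠ 0 := Ring.two_ne_zero hchar
  obtain ⟨f, hf⟩ : ∃ f, f = 1 - e := ⟨_, rfl⟩
  have hef : e * f = 0 := by rw [hf, mul_sub, mul_one, he, sub_self]
  have hfe : f * e = 0 := by rw [hf, sub_mul, one_mul, he, sub_self]
  have hff : f * f = f := by
    nth_rewrite 1 [hf]
    rw [sub_mul, one_mul, hef, sub_zero]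
  rw [← hf] at htri ⊢
  intro x
  have hem : e * (e * x * f) = e * x * f := by simp only [← mul_assoc, he]
  have hme : e * x * f * e = 0 := by rw [mul_assoc, hfe, mul_zero]
  have hfm : f * (e * x * f) = 0 := by simp only [← mul_assoc, hfe, zero_mul]
  have hΘ := hJ e (e * x * f)
  rw [hem, hme, add_zero] at hΘ
  refine ⟨jordan_compression_eq_zero h2 Θ hJ hff ?_ ?_,
    jordan_compression_eq_zero h2 Θ hJ he ?_ ?_, ?_, ?_⟩
  · simp only [← mul_assoc, hfe, zero_mul]
  · rw [mul_assoc, hef, mul_zero]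
  · simp only [← mul_assoc, hef, zero_mul]
  · rw [mul_assoc, hfe, mul_zero]
  · generalize Θ (e * x * f) = t at *
    have h := congrArg (fun z => e * z * e) hΘ
    have h1 : e * (Θ e * (e * x * f) + e * x * f * Θ e + e * t + t * e) * e
        = e * Θ e * (e * x * f * e) + (e * e) * x * (f * Θ e * e)
          + (e * e) * t * e + e * t * (e * e) := by noncomm_ring
    simp only [h1, hme, htri, he, mul_zero, zero_add] at h
    exact left_eq_add.1 h
  · generalize Θ (e * x * f) = t at *
    have h := congrArg (fun z => f * z * f) hΘ
    have h1 : f * (Θ e * (e * x * f) + e * x * f * Θ e + e * t + t * e) * f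
        = (f * Θ e * e) * x * (f * f) + f * (e * x * f) * Θ e * f
          + (f * e) * t * f + f * t * (e * f) := by noncomm_ring
    simpa only [h1, hfm, htri, hfe, hef, mul_zero, zero_mul, add_zero] using h
end

section
/- Suppose char K ≠ 2 and let Θ : Λ → Λ be a Jordan derivation. Then the compression of Θ to each diagonal corner is a Jordan derivation of that corner: for all x, y ∈ Λ, writing a := e*x*e and a' := e*y*e, one has e*Θ(a*a' + a'*a)*e = (e*Θ(a)*e)*a' + a'*(e*Θ(a)*e) + a*(e*Θ(a')*e) + (e*Θ(a')*e)*a; and writing b := f*x*f and b' := f*y*f, one has f*Θ(b*b' + b'*b)*f = (f*Θ(b)*f)*b' + b'*(f*Θ(b)*f) + b*(f*Θ(b')*f) + (f*Θ(b')*f)*b. -/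
set_option synthInstance.maxHeartbeats 1000000
set_option maxHeartbeats 1000000

/-!
If `g` is idempotent and `a = g * x * g`, then `g * a = a = a * g`. Compressing the Jordan identity
for `a`, `a'` by `g` on both sides, each term such as `g * (Θ a * a') * g` becomes
`(g * Θ a * g) * a'`, because `a' = g * a' = a' * g`. This works for any idempotent
(`compression_jordan`); the two corners are the cases `g = e` and `g = 1 - e`.
-/

/-- The compression of a Jordan derivation by an idempotent `g` satisfies the Jordan identity
on the corner `gΛg`, whose elements `a` are characterised by `g * a = a = a * g`. -/
theorem compression_jordan {Λ : Type*} [Ring Λ] (g : Λ) (Θ : Λ → Λ)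
    (hJ : ∀ x y : Λ, Θ (x * y + y * x) = Θ x * y + y * Θ x + x * Θ y + Θ y * x)
    (a b : Λ) (hga : g * a = a) (hag : a * g = a) (hgb : g * b = b) (hbg : b * g = b) :
    g * Θ (a * b + b * a) * g =
      (g * Θ a * g) * b + b * (g * Θ a * g) + a * (g * Θ b * g) + (g * Θ b * g) * a := by
  have right (c t : Λ) (hgc : g * c = c) (hcg : c * g = c) :
      g * (t * c) * g = (g * t * g) * c := by
    simp only [mul_assoc, hgc, hcg]
  have left (c t : Λ) (hgc : g * c = c) (hcg : c * g = c) :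
      g * (c * t) * g = c * (g * t * g) := by
    simp only [← mul_assoc, hgc, hcg]
  rw [hJ]
  simp only [mul_add, add_mul, right b _ hgb hbg, left b _ hgb hbg, right a _ hga hag,
    left a _ hga hag]

theorem jordan_derivation_diagonal_compressions
    {K : Type*} [Field K] {Λ : Type*} [Ring Λ] [Algebra K Λ]
    (hchar : ringChar K ≠ 2)
    (e : Λ) (he : e * e = e)
    (htri : ∀ x : Λ, (1 - e) * x * e = 0)
    (Θ : Λ →ₗ[K] Λ)
    (hJ : ∀ x y : Λ, Θ (x * y + y * x) = Θ x * y + y * Θ x + x * Θ y + Θ y * x) :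
    ∀ x y : Λ,
      (e * Θ ((e * x * e) * (e * y * e) + (e * y * e) * (e * x * e)) * e =
        (e * Θ (e * x * e) * e) * (e * y * e) + (e * y * e) * (e * Θ (e * x * e) * e) +
          (e * x * e) * (e * Θ (e * y * e) * e) + (e * Θ (e * y * e) * e) * (e * x * e)) ∧
      ((1 - e) * Θ (((1 - e) * x * (1 - e)) * ((1 - e) * y * (1 - e)) +
            ((1 - e) * y * (1 - e)) * ((1 - e) * x * (1 - e))) * (1 - e) =
        ((1 - e) * Θ ((1 - e) * x * (1 - e)) * (1 - e)) * ((1 - e) * y * (1 - e)) +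
          ((1 - e) * y * (1 - e)) * ((1 - e) * Θ ((1 - e) * x * (1 - e)) * (1 - e)) +
          ((1 - e) * x * (1 - e)) * ((1 - e) * Θ ((1 - e) * y * (1 - e)) * (1 - e)) +
          ((1 - e) * Θ ((1 - e) * y * (1 - e)) * (1 - e)) * ((1 - e) * x * (1 - e))) := by
  have corner (g : Λ) (hg : g * g = g) (x : Λ) :
      g * (g * x * g) = g * x * g ∧ g * x * g * g = g * x * g :=
    ⟨by simp only [← mul_assoc, hg], by simp only [mul_assoc, hg]⟩
  have key (g : Λ) (hg : g * g = g) (x y : Λ) :=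
    compression_jordan g Θ hJ (g * x * g) (g * y * g)
      (corner g hg x).1 (corner g hg x).2 (corner g hg y).1 (corner g hg y).2
  have hf : (1 - e) * (1 - e) = 1 - e := IsIdempotentElem.one_sub he
  exact fun x y => ⟨key e he x y, key (1 - e) hf x y⟩
end

section
/- Suppose char K ≠ 2, let Θ : Λ → Λ be a Jordan derivation, and set m₀ := e*Θ(e)*f. Then for every x ∈ Λ one has e*Θ(e*x*e)*f = (e*x*e)*m₀ and e*Θ(f*x*f)*f = - m₀*(f*x*f) (the off-diagonal component of Θ on the corners is the inner map determined by m₀). -/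
set_option synthInstance.maxHeartbeats 1000000
set_option maxHeartbeats 1000000

/-!
Write `f = 1 - e`. If `a = e * x * e`, then `a` and `f` annihilate each other, so applying the Jordan
identity to `(a, f)` and compressing by `e * _ * f` gives `e * Θ a * f = -(a * Θ f * f)`. Outside
characteristic two the Jordan identity at `(1, 1)` forces `Θ 1 = 0`, hence `Θ f = -Θ e`, which is the
first formula. The second one comes in the same way from the annihilating pair `(f * x * f, e)`.
-/

/-- For `a` and `g` annihilating each other, the Jordan identity says that
`Θ a * g + g * Θ a + a * Θ g + Θ g * a` vanishes; this is that relation multiplied by `p` on the left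
and by `q` on the right. -/
lemma jordan_compress {Λ : Type*} [Ring Λ] {Θ : Λ → Λ} (hΘ0 : Θ 0 = 0)
    (hJ : ∀ x y : Λ, Θ (x * y + y * x) = Θ x * y + y * Θ x + x * Θ y + Θ y * x)
    {a g : Λ} (h1 : a * g = 0) (h2 : g * a = 0) (p q : Λ) :
    p * Θ a * (g * q) + p * g * (Θ a * q) + p * a * (Θ g * q) + p * Θ g * (a * q) = 0 := by
  have h := hJ a g
  rw [h1, h2, add_zero, hΘ0] at h
  calc _ = p * (Θ a * g + g * Θ a + a * Θ g + Θ g * a) * q := by noncomm_ring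
    _ = 0 := by rw [← h]; simp

theorem jordan_derivation_offdiagonal_inner
    {K : Type*} [Field K] {Λ : Type*} [Ring Λ] [Algebra K Λ]
    (hchar : ringChar K ≠ 2)
    (e : Λ) (he : e * e = e)
    (htri : ∀ x : Λ, (1 - e) * x * e = 0)
    (Θ : Λ →ₗ[K] Λ)
    (hJ : ∀ x y : Λ, Θ (x * y + y * x) = Θ x * y + y * Θ x + x * Θ y + Θ y * x) :
    ∀ x : Λ,
      e * Θ (e * x * e) * (1 - e) = (e * x * e) * (e * Θ e * (1 - e)) ∧
      e * Θ ((1 - e) * x * (1 - e)) * (1 - e) =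
        -((e * Θ e * (1 - e)) * ((1 - e) * x * (1 - e))) := by
  intro x
  have h2 : (2 : K) ≠ 0 := Ring.two_ne_zero hchar
  have hΘ1 : Θ 1 = 0 := by
    have h := hJ 1 1
    simp only [mul_one, one_mul, map_add] at h
    have h' : (2 : K) • Θ 1 = 0 := by
      rw [two_smul]
      have h4 : Θ 1 + Θ 1 + (Θ 1 + Θ 1) = Θ 1 + Θ 1 := by rw [← add_assoc]; exact h.symm
      exact add_eq_left.mp h4
    exact (smul_eq_zero.mp h').resolve_left h2
  have hΘf : Θ (1 - e) = -Θ e := by rw [map_sub, hΘ1, zero_sub]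
  have hef : e * (1 - e) = 0 := by rw [mul_sub, mul_one, he, sub_self]
  have hfe : (1 - e) * e = 0 := by rw [sub_mul, one_mul, he, sub_self]
  have hff : (1 - e) * (1 - e) = 1 - e := by rw [mul_sub, mul_one, hfe, sub_zero]
  generalize 1 - e = f at *
  constructor
  · have haf : e * x * e * f = 0 := by rw [mul_assoc, hef, mul_zero]
    have hfa : f * (e * x * e) = 0 := by simp only [← mul_assoc, hfe, zero_mul]
    have h := jordan_compress (map_zero Θ) hJ haf hfa e f
    have hea : e * (e * x * e) = e * x * e := by simp only [← mul_assoc, he]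
    have hae : e * x * e * e = e * x * e := by rw [mul_assoc, he]
    rw [hff, hef, haf, hea, hΘf, zero_mul, mul_zero, add_zero, add_zero, neg_mul, mul_neg] at h
    rw [add_neg_eq_zero.mp h, mul_assoc e (Θ e) f, ← mul_assoc (e * x * e) e, hae]
  · have hbe : f * x * f * e = 0 := by rw [mul_assoc, hfe, mul_zero]
    have heb : e * (f * x * f) = 0 := by simp only [← mul_assoc, hef, zero_mul]
    have h := jordan_compress (map_zero Θ) hJ hbe heb e f
    have hfb : f * (f * x * f) = f * x * f := by simp only [← mul_assoc, hff]
    have hbf : f * x * f * f = f * x * f := by rw [mul_assoc, hff]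
    rw [hef, he, heb, hbf, zero_mul, mul_zero, add_zero, zero_add, ← mul_assoc] at h
    rw [eq_neg_of_add_eq_zero_left h, mul_assoc (e * Θ e) f, hfb]
end

section
/- Suppose char K ≠ 2 and let Θ : Λ → Λ be a Jordan derivation. Then the bimodule component τ₂(m) := e*Θ(m)*f (for m in eΛf) is compatible with both module actions: for all x, y ∈ Λ, e*Θ((e*x*e)*(e*y*f))*f = (e*x*e)*(e*Θ(e*y*f)*f) + (e*Θ(e*x*e)*e)*(e*y*f), and e*Θ((e*x*f)*(f*y*f))*f = (e*Θ(e*x*f)*f)*(f*y*f) + (e*x*f)*(f*Θ(f*y*f)*f). -/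
/-!
Write `f = 1 - e`. For `a ∈ eΛe` and `m ∈ eΛf` one has `m * a = 0`, so the Jordan identity
expresses `Θ (a * m)` as `Θ a * m + m * Θ a + a * Θ m + Θ m * a`. Compressing by `e _ f` kills the
last term and turns the second into `m * (f * Θ a * f)`. That term vanishes because
`f * a = a * f = 0`: applying `Θ` to `a * f + f * a = 0` and compressing by `f _ f` gives
`2 • (f * Θ a * f) = 0`, and `2` is invertible in `K` (`corner_eq_zero`).
The right action of `fΛf` is symmetric.
-/

set_option synthInstance.maxHeartbeats 1000000
set_option maxHeartbeats 1000000

/-- A Jordan derivation maps an element orthogonal to an idempotent `p` to one with zero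
`p`-`p` Peirce corner. This is where `char K ≠ 2` enters. -/
lemma corner_eq_zero {K : Type*} [Field K] {Λ : Type*} [Ring Λ] [Algebra K Λ]
    (hchar : ringChar K ≠ 2) (Θ : Λ →ₗ[K] Λ)
    (hJ : ∀ x y : Λ, Θ (x * y + y * x) = Θ x * y + y * Θ x + x * Θ y + Θ y * x)
    {p a : Λ} (hp : p * p = p) (hpa : p * a = 0) (hap : a * p = 0) :
    p * Θ a * p = 0 := by
  have h := hJ a p
  rw [hap, hpa, add_zero, map_zero] at h
  have h2 : p * Θ a * p + p * Θ a * p = 0 := by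
    calc p * Θ a * p + p * Θ a * p
        = p * Θ a * (p * p) + p * p * Θ a * p + p * a * Θ p * p + p * Θ p * (a * p) := by
          rw [hp, hpa, hap]; simp
      _ = p * (Θ a * p + p * Θ a + a * Θ p + Θ p * a) * p := by noncomm_ring
      _ = 0 := by rw [← h]; simp
  rw [← two_smul K] at h2
  exact (smul_eq_zero.mp h2).resolve_left (Ring.two_ne_zero hchar)

theorem jordan_derivation_bimodule_component
    {K : Type*} [Field K] {Λ : Type*} [Ring Λ] [Algebra K Λ]
    (hchar : ringChar K ≠ 2)
    (e : Λ) (he : e * e = e)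
    (htri : ∀ x : Λ, (1 - e) * x * e = 0)
    (Θ : Λ →ₗ[K] Λ)
    (hJ : ∀ x y : Λ, Θ (x * y + y * x) = Θ x * y + y * Θ x + x * Θ y + Θ y * x) :
    ∀ x y : Λ,
      (e * Θ ((e * x * e) * (e * y * (1 - e))) * (1 - e) =
        (e * x * e) * (e * Θ (e * y * (1 - e)) * (1 - e)) +
          (e * Θ (e * x * e) * e) * (e * y * (1 - e))) ∧
      (e * Θ ((e * x * (1 - e)) * ((1 - e) * y * (1 - e))) * (1 - e) =
        (e * Θ (e * x * (1 - e)) * (1 - e)) * ((1 - e) * y * (1 - e)) +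
          (e * x * (1 - e)) * ((1 - e) * Θ ((1 - e) * y * (1 - e)) * (1 - e))) := by
  intro x y
  obtain ⟨f, hf⟩ : ∃ f, f = 1 - e := ⟨_, rfl⟩
  rw [← hf]
  have hef : e * f = 0 := by rw [hf, mul_sub, mul_one, he, sub_self]
  have hfe : f * e = 0 := by rw [hf, sub_mul, one_mul, he, sub_self]
  have hff : f * f = f := by
    nth_rewrite 1 [hf]
    rw [sub_mul, one_mul, hef, sub_zero]
  constructor
  · obtain ⟨a, ha⟩ : ∃ a, a = e * x * e := ⟨_, rfl⟩
    obtain ⟨m, hm⟩ : ∃ m, m = e * y * f := ⟨_, rfl⟩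
    rw [← ha, ← hm]
    have hea : e * a = a := by rw [ha, ← mul_assoc, ← mul_assoc, he]
    have hae : a * e = a := by rw [ha, mul_assoc, he]
    have hem : e * m = m := by rw [hm, ← mul_assoc, ← mul_assoc, he]
    have hmf : m * f = m := by rw [hm, mul_assoc, hff]
    have hfa : f * a = 0 := by rw [← hea, ← mul_assoc, hfe, zero_mul]
    have haf : a * f = 0 := by rw [← hae, mul_assoc, hef, mul_zero]
    have hma : m * a = 0 := by rw [← hmf, mul_assoc, hfa, mul_zero]
    have hc := corner_eq_zero hchar Θ hJ hff hfa haf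
    have h := hJ a m
    rw [hma, add_zero] at h
    rw [h]
    calc e * (Θ a * m + m * Θ a + a * Θ m + Θ m * a) * f
        = e * Θ a * (m * f) + e * m * Θ a * f + e * a * Θ m * f + e * Θ m * (a * f) := by
          noncomm_ring
      _ = e * Θ a * (e * m) + m * f * Θ a * f + a * e * Θ m * f := by
          rw [hmf, hem, hea, haf, hae, mul_zero, add_zero]
      _ = a * (e * Θ m * f) + e * Θ a * e * m + m * (f * Θ a * f) := by noncomm_ring
      _ = _ := by rw [hc, mul_zero, add_zero]
  · obtain ⟨m, hm⟩ : ∃ m, m = e * x * f := ⟨_, rfl⟩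
    obtain ⟨b, hb⟩ : ∃ b, b = f * y * f := ⟨_, rfl⟩
    rw [← hm, ← hb]
    have hfb : f * b = b := by rw [hb, ← mul_assoc, ← mul_assoc, hff]
    have hbf : b * f = b := by rw [hb, mul_assoc, hff]
    have hem : e * m = m := by rw [hm, ← mul_assoc, ← mul_assoc, he]
    have hmf : m * f = m := by rw [hm, mul_assoc, hff]
    have heb : e * b = 0 := by rw [← hfb, ← mul_assoc, hef, zero_mul]
    have hbe : b * e = 0 := by rw [← hbf, mul_assoc, hfe, mul_zero]
    have hbm : b * m = 0 := by rw [← hem, ← mul_assoc, hbe, zero_mul]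
    have hc := corner_eq_zero hchar Θ hJ he heb hbe
    have h := hJ m b
    rw [hbm, add_zero] at h
    rw [h]
    calc e * (Θ m * b + b * Θ m + m * Θ b + Θ b * m) * f
        = e * Θ m * (b * f) + e * b * Θ m * f + e * m * Θ b * f + e * Θ b * (m * f) := by
          noncomm_ring
      _ = e * Θ m * (f * b) + m * f * Θ b * f + e * Θ b * (e * m) := by
          rw [hbf, hfb, heb, hmf, hem, zero_mul, zero_mul, add_zero]
      _ = e * Θ m * f * b + m * (f * Θ b * f) + e * Θ b * e * m := by noncomm_ring
      _ = _ := by rw [hc, zero_mul, add_zero]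
end

section
/- Let Θ : Λ → Λ be a K-linear map and set m₀ := e*Θ(e)*f. Assume that for all x, y ∈ Λ: (i) f*Θ(e*x*e)*f = 0, e*Θ(f*x*f)*e = 0, e*Θ(e*x*f)*e = 0, and f*Θ(e*x*f)*f = 0; (ii) e*Θ(e*x*e)*f = (e*x*e)*m₀ and e*Θ(f*x*f)*f = - m₀*(f*x*f); (iii) e*Θ((e*x*e)*(e*y*e))*e = (e*Θ(e*x*e)*e)*(e*y*e) + (e*x*e)*(e*Θ(e*y*e)*e) and f*Θ((f*x*f)*(f*y*f))*f = (f*Θ(f*x*f)*f)*(f*y*f) + (f*x*f)*(f*Θ(f*y*f)*f); (iv) e*Θ((e*x*e)*(e*y*f))*f = (e*x*e)*(e*Θ(e*y*f)*f) + (e*Θ(e*x*e)*e)*(e*y*f) and e*Θ((e*x*f)*(f*y*f))*f = (e*Θ(e*x*f)*f)*(f*y*f) + (e*x*f)*(f*Θ(f*y*f)*f). Then Θ is a derivation of Λ. -/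
/-!
Write `f = 1 - e` and `m₀ = e * Θ e * f`. Since `f * Λ * e = 0`, every `x` is the sum of its
components `a = e * x * e`, `m = e * x * f` and `b = f * x * f`, and the hypotheses on the corners of
`Θ` say that
`Θ a = α a + a * m₀`, `Θ m = γ m`, `Θ b = β b - m₀ * b`,
where `α`, `β` are derivations of the diagonal corners and `γ` is compatible with them on the
bimodule. Both sides of the Leibniz rule are then expanded in components: most products vanish
because an inner `e` meets an inner `f`, the inner-derivation terms `a * m₀ * b'` cancel, and the
rest are exactly the corner identities.
-/

theorem mul_eq_zero_of_orthogonal_supports {Λ : Type*} [Ring Λ] {p q : Λ} (hpq : p * q = 0)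
    {x y : Λ} (hx : x * p = x) (hy : q * y = y) : x * y = 0 := by
  rw [← hx, ← hy, mul_assoc, ← mul_assoc p, hpq, zero_mul, mul_zero]

/-- The Peirce decomposition in the triangular case, where the `(f, e)` corner is zero. -/
theorem triangular_decomposition {Λ : Type*} [Ring Λ] (e f : Λ) (hf : e + f = 1)
    (htri : ∀ x : Λ, f * x * e = 0) (x : Λ) :
    x = e * x * e + e * x * f + f * x * f := by
  calc x = (e + f) * x * (e + f) := by rw [hf, one_mul, mul_one]
    _ = e * x * e + e * x * f + f * x * f + f * x * e := by noncomm_ring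
    _ = _ := by rw [htri, add_zero]

theorem derivation_of_component_conditions
    {K : Type*} [Field K] {Λ : Type*} [Ring Λ] [Algebra K Λ]
    (e : Λ) (he : e * e = e)
    (htri : ∀ x : Λ, (1 - e) * x * e = 0)
    (Θ : Λ →ₗ[K] Λ)
    (h1 : ∀ x : Λ,
      (1 - e) * Θ (e * x * e) * (1 - e) = 0 ∧
      e * Θ ((1 - e) * x * (1 - e)) * e = 0 ∧
      e * Θ (e * x * (1 - e)) * e = 0 ∧
      (1 - e) * Θ (e * x * (1 - e)) * (1 - e) = 0)
    (h2 : ∀ x : Λ,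
      e * Θ (e * x * e) * (1 - e) = (e * x * e) * (e * Θ e * (1 - e)) ∧
      e * Θ ((1 - e) * x * (1 - e)) * (1 - e) =
        -((e * Θ e * (1 - e)) * ((1 - e) * x * (1 - e))))
    (h3 : ∀ x y : Λ,
      (e * Θ ((e * x * e) * (e * y * e)) * e =
        (e * Θ (e * x * e) * e) * (e * y * e) + (e * x * e) * (e * Θ (e * y * e) * e)) ∧
      ((1 - e) * Θ (((1 - e) * x * (1 - e)) * ((1 - e) * y * (1 - e))) * (1 - e) =
        ((1 - e) * Θ ((1 - e) * x * (1 - e)) * (1 - e)) * ((1 - e) * y * (1 - e)) +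
          ((1 - e) * x * (1 - e)) * ((1 - e) * Θ ((1 - e) * y * (1 - e)) * (1 - e))))
    (h4 : ∀ x y : Λ,
      (e * Θ ((e * x * e) * (e * y * (1 - e))) * (1 - e) =
        (e * x * e) * (e * Θ (e * y * (1 - e)) * (1 - e)) +
          (e * Θ (e * x * e) * e) * (e * y * (1 - e))) ∧
      (e * Θ ((e * x * (1 - e)) * ((1 - e) * y * (1 - e))) * (1 - e) =
        (e * Θ (e * x * (1 - e)) * (1 - e)) * ((1 - e) * y * (1 - e)) +
          (e * x * (1 - e)) * ((1 - e) * Θ ((1 - e) * y * (1 - e)) * (1 - e)))) :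
    ∀ x y : Λ, Θ (x * y) = Θ x * y + x * Θ y := by
  have hef : e * (1 - e) = 0 := by rw [mul_sub, he, mul_one, sub_self]
  have hfe : (1 - e) * e = 0 := by rw [sub_mul, he, one_mul, sub_self]
  have hff : (1 - e) * (1 - e) = 1 - e := by rw [mul_sub, hfe, mul_one, sub_zero]
  have hsum : e + (1 - e) = 1 := by abel
  generalize 1 - e = f at *
  have hdec := triangular_decomposition e f hsum htri
  have el : ∀ z w, e * (e * z * w) = e * z * w := fun z w => by
    rw [← mul_assoc, ← mul_assoc, he]
  have fl : ∀ z w, f * (f * z * w) = f * z * w := fun z w => by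
    rw [← mul_assoc, ← mul_assoc, hff]
  have er : ∀ z w, w * z * e * e = w * z * e := fun z w => by rw [mul_assoc, he]
  have fr : ∀ z w, w * z * f * f = w * z * f := fun z w => by rw [mul_assoc, hff]
  have hA : ∀ x, Θ (e * x * e) = e * Θ (e * x * e) * e + (e * x * e) * (e * Θ e * f) := fun x => by
    conv_lhs => rw [hdec (Θ (e * x * e)), (h1 x).1, (h2 x).1, add_zero]
  have hB : ∀ x, Θ (f * x * f) = f * Θ (f * x * f) * f - (e * Θ e * f) * (f * x * f) := fun x => by
    conv_lhs => rw [hdec (Θ (f * x * f)), (h1 x).2.1, (h2 x).2, zero_add]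
    abel
  have hM : ∀ x, Θ (e * x * f) = e * Θ (e * x * f) * f := fun x => by
    conv_lhs => rw [hdec (Θ (e * x * f)), (h1 x).2.2.1, (h1 x).2.2.2, zero_add, add_zero]
  have inAA : ∀ x y, (e * x * e) * (e * y * e) = e * (x * e * y) * e := fun x y => by
    simp only [mul_assoc]; rw [← mul_assoc e e, he]
  have inAM : ∀ x y, (e * x * e) * (e * y * f) = e * (x * e * y) * f := fun x y => by
    simp only [mul_assoc]; rw [← mul_assoc e e, he]
  have inMB : ∀ x y, (e * x * f) * (f * y * f) = e * (x * f * y) * f := fun x y => by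
    simp only [mul_assoc]; rw [← mul_assoc f f, hff]
  have inBB : ∀ x y, (f * x * f) * (f * y * f) = f * (x * f * y) * f := fun x y => by
    simp only [mul_assoc]; rw [← mul_assoc f f, hff]
  have hAA : ∀ x y, Θ ((e * x * e) * (e * y * e)) =
      (e * Θ (e * x * e) * e) * (e * y * e) + (e * x * e) * (e * Θ (e * y * e) * e) +
        (e * x * e) * (e * y * e) * (e * Θ e * f) := fun x y => by
    rw [← (h3 x y).1, inAA]; exact hA _
  have hBB : ∀ x y, Θ ((f * x * f) * (f * y * f)) =
      (f * Θ (f * x * f) * f) * (f * y * f) + (f * x * f) * (f * Θ (f * y * f) * f) -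
        (e * Θ e * f) * ((f * x * f) * (f * y * f)) := fun x y => by
    rw [← (h3 x y).2, inBB]; exact hB _
  have hAM : ∀ x y, Θ ((e * x * e) * (e * y * f)) =
      (e * x * e) * (e * Θ (e * y * f) * f) + (e * Θ (e * x * e) * e) * (e * y * f) :=
    fun x y => by rw [← (h4 x y).1, inAM]; exact hM _
  have hMB : ∀ x y, Θ ((e * x * f) * (f * y * f)) =
      (e * Θ (e * x * f) * f) * (f * y * f) + (e * x * f) * (f * Θ (f * y * f) * f) :=
    fun x y => by rw [← (h4 x y).2, inMB]; exact hM _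
  have kef : ∀ z w u v, (u * z * e) * (f * w * v) = 0 := fun z w u v =>
    mul_eq_zero_of_orthogonal_supports hef (er z u) (fl w v)
  have kfe : ∀ z w u v, (u * z * f) * (e * w * v) = 0 := fun z w u v =>
    mul_eq_zero_of_orthogonal_supports hfe (fr z u) (el w v)
  intro x y
  have hxy : x * y = (e * x * e) * (e * y * e) + (e * x * e) * (e * y * f) +
      (e * x * f) * (f * y * f) + (f * x * f) * (f * y * f) := by
    conv_lhs => rw [hdec x, hdec y]
    simp only [mul_add, add_mul, kef, kfe]
    abel
  have hΘ : ∀ x, Θ x = e * Θ (e * x * e) * e + (e * x * e) * (e * Θ e * f) +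
      e * Θ (e * x * f) * f + (f * Θ (f * x * f) * f - (e * Θ e * f) * (f * x * f)) := fun x => by
    conv_lhs => rw [hdec x, map_add, map_add, hA, hM, hB]
  have hR : Θ x * y + x * Θ y =
      Θ x * (e * y * e + e * y * f + f * y * f) + (e * x * e + e * x * f + f * x * f) * Θ y := by
    rw [← hdec x, ← hdec y]
  rw [hR, hΘ x, hΘ y, hxy, map_add, map_add, map_add, hAA, hAM, hMB, hBB]
  -- `kef` and `kfe` only match a product of two components; these variants handle three factors.
  have k2 : ∀ z w u v t, (u * z * f) * ((e * w * v) * t) = 0 := fun z w u v t => by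
    rw [← mul_assoc, kfe, zero_mul]
  have k4 : ∀ z w u v t, t * (u * z * f) * (e * w * v) = 0 := fun z w u v t => by
    rw [mul_assoc, kfe, mul_zero]
  simp only [mul_add, add_mul, mul_sub, sub_mul, kef, kfe, k2, k4]
  simp only [← mul_assoc]
  abel
end

section
/- Suppose char K ≠ 2, suppose that for every x ∈ Λ there exists k ∈ K with f*x*f = k • f (the corner fΛf is spanned by f, so Λ is a one-point extension), and suppose there exists x₀ ∈ Λ with e*x₀*f ≠ 0 (the bimodule eΛf is nonzero). Then every Jordan derivation Θ of Λ satisfies f*Θ(x)*f = 0 for all x ∈ Λ. -/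
/-!
Write `f = 1 - e`. Triangularity says `f * x = f * x * f`, so compression `x ↦ f * x * f` is
multiplicative, and the one-point hypothesis gives `f * x = k • f`. Put `g x = f * Θ x * f`.
The Jordan identity for `(f, f)` gives `2 g f = 4 g f`, so `g f = 0`. The Jordan identity for
`(x, f)`, compressed by `f`, gives `g (x * f) + g (f * x) = 2 g x`, and `g (f * x) = k • g f = 0`;
thus `g (x * f) = 2 g x` for all `x`. Replacing `x` by `x * f` yields `g (x * f) = 0`, hence
`2 g x = 0` and `g x = 0`.
-/


set_option synthInstance.maxHeartbeats 1000000
set_option maxHeartbeats 1000000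

theorem jordan_derivation_one_point_extension_corner_vanishes
    {K : Type*} [Field K] {Λ : Type*} [Ring Λ] [Algebra K Λ]
    (hchar : ringChar K ≠ 2)
    (e : Λ) (he : e * e = e)
    (htri : ∀ x : Λ, (1 - e) * x * e = 0)
    (hone : ∀ x : Λ, ∃ k : K, (1 - e) * x * (1 - e) = k • (1 - e))
    (hM : ∃ x₀ : Λ, e * x₀ * (1 - e) ≠ 0)
    (Θ : Λ →ₗ[K] Λ)
    (hJ : ∀ x y : Λ, Θ (x * y + y * x) = Θ x * y + y * Θ x + x * Θ y + Θ y * x) :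
    ∀ x : Λ, (1 - e) * Θ x * (1 - e) = 0 := by
  have h2 : (2 : K) ≠ 0 := Ring.two_ne_zero hchar
  have cancel : ∀ z : Λ, z + z = 0 → z = 0 := fun z hz => by
    rw [← two_smul K] at hz
    exact (smul_eq_zero.mp hz).resolve_left h2
  have hff : (1 - e) * (1 - e) = 1 - e := by
    simp only [mul_sub, sub_mul, one_mul, mul_one, he]; abel
  have hfx : ∀ x : Λ, (1 - e) * x * (1 - e) = (1 - e) * x := fun x => by
    rw [mul_sub, htri, mul_one, sub_zero]
  generalize 1 - e = f at *
  have gf : f * Θ f * f = 0 := by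
    have h := congrArg (fun z => f * z * f) (hJ f f)
    simp only [hff, map_add, mul_add, add_mul, ← mul_assoc, hfx] at h
    rw [hfx]
    apply cancel
    simpa [add_assoc] using h
  have gfl : f * Θ f = 0 := by rw [← hfx, gf]
  have gxf : ∀ x : Λ, f * Θ (x * f) = f * Θ x + f * Θ x := fun x => by
    obtain ⟨k, hk⟩ := hone x
    rw [hfx] at hk
    have h := congrArg (fun z => f * z) (hJ x f)
    simp only [map_add, hk, map_smul, mul_add, mul_smul_comm, ← mul_assoc, hfx, hff, gfl,
      smul_mul_assoc, zero_mul, smul_zero, add_zero] at h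
    exact h
  intro x
  have h := gxf (x * f)
  rw [mul_assoc, hff] at h
  have h0 : f * Θ (x * f) = 0 := by simpa using h
  rw [hfx]
  exact cancel _ (by rw [← gxf, h0])
end

section
/- Suppose char K ≠ 2 and that for every x ∈ Λ there exists k ∈ K with f*x*f = k • f (Λ is a one-point extension of the corner A := eΛe). Let A := {x ∈ Λ | e*x*e = x}, a non-unital subalgebra of Λ with multiplicative identity e. Assume that every K-linear map d : A → A satisfying d(u*v + v*u) = d(u)*v + v*d(u) + u*d(v) + d(v)*u for all u, v ∈ A also satisfies d(u*v) = d(u)*v + u*d(v) for all u, v ∈ A (every Jordan derivation of A is a derivation). Then every Jordan derivation of Λ is a derivation. -/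
/-!
Write `f = 1 - e`, `A = eΛe`, `M = eΛf`. Triangularity and the one-point hypothesis give
`Λ = A ⊕ M ⊕ K f`. Since `2` is invertible, the Jordan identity at `(e, e)` gives
`Θ e = Θ e * e + e * Θ e`, whence `Θ e` lies in `M`. Subtracting the inner derivation
`x ↦ x * Θ e - Θ e * x`, which has the same value at `e`, reduces to a Jordan derivation `D` with
`D e = 0`. The Jordan identity against `e` shows that `D` preserves `A` and `M` and kills `f`
(`jordan_maps_corner`, `jordan_maps_offDiag`, `jordan_one`). On `A` it is a derivation by
hypothesis, and `D (a * m) = D a * m + a * D m` for `a ∈ A`, `m ∈ M` because `M * A = 0`. As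
`M * M = 0`, expanding a product along the decomposition shows that `D` is a derivation
(`jordan_normalized`).
-/

set_option synthInstance.maxHeartbeats 1000000
set_option maxHeartbeats 1000000

/-- The corner `eΛe` of an algebra with respect to an idempotent `e`,
as a non-unital subalgebra (with multiplicative identity `e`). -/
def corner (K : Type*) [Field K] {L : Type*} [Ring L] [Algebra K L]
    (e : L) (he : e * e = e) : NonUnitalSubalgebra K L where
  carrier := {x | e * x * e = x}
  add_mem' := fun {x y} hx hy => by
    simp only [Set.mem_setOf_eq] at *
    rw [mul_add, add_mul, hx, hy]
  zero_mem' := by simp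
  mul_mem' := fun {x y} hx hy => by
    simp only [Set.mem_setOf_eq] at *
    have hex : e * x = x := by
      conv_lhs => rw [← hx]
      rw [← mul_assoc, ← mul_assoc, he, hx]
    have hye : y * e = y := by
      conv_lhs => rw [← hy]
      rw [mul_assoc, he, hy]
    rw [← mul_assoc, hex, mul_assoc, hye]
  smul_mem' := fun k x hx => by
    simp only [Set.mem_setOf_eq] at *
    rw [mul_smul_comm, smul_mul_assoc, hx]

section Jordan

variable {K : Type*} [Field K] {Λ : Type*} [Ring Λ] [Algebra K Λ]

theorem two_cancel (hchar : ringChar K ≠ 2) {x : Λ} (h : x + x = 0) : x = 0 := by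
  have h2 : (2 : K) ≠ 0 := Ring.two_ne_zero hchar
  have h3 : (2 : K) • x = 0 := by rw [two_smul, h]
  exact (smul_eq_zero_iff_right h2).mp h3

theorem jordan_one (hchar : ringChar K ≠ 2) (D : Λ →ₗ[K] Λ)
    (hJ : ∀ x y : Λ, D (x * y + y * x) = D x * y + y * D x + x * D y + D y * x) :
    D 1 = 0 := by
  have h := hJ 1 1
  simp only [mul_one, one_mul, map_add] at h
  apply two_cancel hchar
  have h' : (D 1 + D 1) + (D 1 + D 1) = (D 1 + D 1) + 0 := by
    rw [add_zero, ← add_assoc]; exact h.symm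
  exact add_left_cancel h'

/-- A Jordan derivation killing `e` preserves the corner `eΛe`: for `a` in the corner the Jordan
identity against `e` reads `2 D a = D a * e + e * D a`. -/
theorem jordan_maps_corner (hchar : ringChar K ≠ 2) {e : Λ} (he : e * e = e)
    (htri : ∀ x : Λ, x * e = e * x * e) (D : Λ →ₗ[K] Λ)
    (hJ : ∀ x y : Λ, D (x * y + y * x) = D x * y + y * D x + x * D y + D y * x)
    (hDe : D e = 0) {a : Λ} (h1 : e * a = a) (h2 : a * e = a) :
    e * D a = D a ∧ D a * e = D a := by
  have h := hJ a e
  simp only [h1, h2, hDe, mul_zero, zero_mul, add_zero, map_add] at h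
  have t := htri (D a)
  -- Left multiplication by `e` isolates the component of `D a` in `eΛf`.
  have h3 : e * D a = D a * e := by
    have h4 := congrArg (fun z => e * z) h
    simp only [mul_add, ← mul_assoc, he] at h4
    rw [← t] at h4
    exact add_right_cancel h4
  have h5 : D a = e * D a := by
    rw [← h3] at h
    apply sub_eq_zero.mp
    apply two_cancel hchar
    rw [sub_add_sub_comm, h, sub_self]
  exact ⟨h5.symm, by rw [← h3, ← h5]⟩

theorem jordan_maps_offDiag {e : Λ} (he : e * e = e)
    (htri : ∀ x : Λ, x * e = e * x * e) (D : Λ →ₗ[K] Λ)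
    (hJ : ∀ x y : Λ, D (x * y + y * x) = D x * y + y * D x + x * D y + D y * x)
    (hDe : D e = 0) {m : Λ} (h1 : e * m = m) (h2 : m * e = 0) :
    e * D m = D m ∧ D m * e = 0 := by
  have h := hJ m e
  simp only [h1, h2, hDe, mul_zero, zero_mul, add_zero, zero_add] at h
  have t := htri (D m)
  have h3 : D m * e = 0 := by
    have h4 := congrArg (fun z => e * z) h
    simp only [mul_add, ← mul_assoc, he] at h4
    rw [← t] at h4
    exact right_eq_add.mp h4
  rw [h3, zero_add] at h
  exact ⟨h.symm, h3⟩

/-- The theorem for a Jordan derivation `D` normalized by `D e = 0`. -/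
theorem jordan_normalized (hchar : ringChar K ≠ 2) (e : Λ) (he : e * e = e)
    (htri : ∀ x : Λ, x * e = e * x * e)
    (hone : ∀ x : Λ, ∃ k : K, (1 - e) * x * (1 - e) = k • (1 - e))
    (hA : ∀ d : corner K e he →ₗ[K] corner K e he,
      (∀ u v : corner K e he, d (u * v + v * u) = d u * v + v * d u + u * d v + d v * u) →
      (∀ u v : corner K e he, d (u * v) = d u * v + u * d v))
    (D : Λ →ₗ[K] Λ)
    (hJ : ∀ x y : Λ, D (x * y + y * x) = D x * y + y * D x + x * D y + D y * x)
    (hDe : D e = 0) (x y : Λ) : D (x * y) = D x * y + x * D y := by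
  have hcorner : ∀ a : corner K e he, e * (a : Λ) = a ∧ (a : Λ) * e = a := by
    intro a
    have key : ∀ z : Λ, e * z * e = z → e * z = z ∧ z * e = z := by
      intro z hz
      constructor
      · conv_lhs => rw [← hz, ← mul_assoc, ← mul_assoc, he, hz]
      · conv_lhs => rw [← hz, mul_assoc, he, hz]
    exact key a a.2
  have hmem : ∀ a : Λ, e * a = a → a * e = a → a ∈ corner K e he := by
    intro a h1 h2
    change e * a * e = a
    rw [h1, h2]
  let d : corner K e he →ₗ[K] corner K e he :=
    { toFun := fun a => ⟨D a, by
        obtain ⟨h1, h2⟩ := hcorner a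
        obtain ⟨h3, h4⟩ := jordan_maps_corner hchar he htri D hJ hDe h1 h2
        exact hmem _ h3 h4⟩
      map_add' := fun a b => Subtype.ext (map_add D (a : Λ) b)
      map_smul' := fun k a => Subtype.ext (map_smul D k (a : Λ)) }
  have hd := hA d (fun u v => Subtype.ext (hJ u v))
  have hAA : ∀ a b : Λ, e * a = a → a * e = a → e * b = b → b * e = b →
      D (a * b) = D a * b + a * D b := by
    intro a b h1 h2 h3 h4
    exact congrArg Subtype.val (hd ⟨a, hmem a h1 h2⟩ ⟨b, hmem b h3 h4⟩)
  -- `M * A = 0`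
  have hMA : ∀ m a : Λ, m * e = 0 → e * a = a → m * a = 0 := by
    intro m a h1 h2
    rw [← h2, ← mul_assoc, h1, zero_mul]
  have hAM : ∀ a m : Λ, e * a = a → a * e = a → e * m = m → m * e = 0 →
      D (a * m) = D a * m + a * D m := by
    intro a m h1 h2 h3 h4
    have h := hJ a m
    obtain ⟨p1, p2⟩ := jordan_maps_corner hchar he htri D hJ hDe h1 h2
    obtain ⟨q1, q2⟩ := jordan_maps_offDiag he htri D hJ hDe h3 h4
    rw [hMA m a h4 h1, hMA m _ h4 p1, hMA _ a q2 h1, add_zero, add_zero, add_zero] at h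
    exact h
  have hDf : D (1 - e) = 0 := by rw [map_sub, jordan_one hchar D hJ, hDe, sub_zero]
  have hdec : ∀ z : Λ, ∃ (a m : Λ) (k : K), z = a + m + k • (1 - e) ∧
      e * a = a ∧ a * e = a ∧ e * m = m ∧ m * e = 0 := by
    intro z
    obtain ⟨k, hk⟩ := hone z
    refine ⟨z * e, e * z * (1 - e), k, ?_, ?_, ?_, ?_, ?_⟩
    · rw [← hk]
      have t := htri z
      simp only [mul_sub, sub_mul, mul_one, one_mul]
      rw [← t]
      abel
    · rw [← mul_assoc, ← htri z]
    · rw [mul_assoc, he]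
    · rw [← mul_assoc, ← mul_assoc, he]
    · rw [mul_assoc, sub_mul, one_mul, he, sub_self, mul_zero]
  obtain ⟨a, m, k, rfl, a1, a2, m1, m2⟩ := hdec x
  obtain ⟨b, n, l, rfl, b1, b2, n1, n2⟩ := hdec y
  obtain ⟨a3, a4⟩ := jordan_maps_corner hchar he htri D hJ hDe a1 a2
  obtain ⟨b3, b4⟩ := jordan_maps_corner hchar he htri D hJ hDe b1 b2
  obtain ⟨m3, m4⟩ := jordan_maps_offDiag he htri D hJ hDe m1 m2
  obtain ⟨n3, n4⟩ := jordan_maps_offDiag he htri D hJ hDe n1 n2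
  have hprod : (a + m + k • (1 - e)) * (b + n + l • (1 - e))
      = a * b + a * n + l • m + (k * l) • (1 - e) := by
    simp only [mul_add, add_mul, mul_sub, sub_mul, smul_mul_assoc, mul_smul_comm, mul_one,
      one_mul, a2, m2, b1, n1, he, hMA m b m2 b1, hMA m n m2 n1,
      sub_self, smul_zero, add_zero]
    module
  rw [hprod]
  simp only [map_add, map_smul, hDf, smul_zero, add_zero, hAA a b a1 a2 b1 b2,
    hAM a n a1 a2 n1 n2]
  simp only [mul_add, add_mul, mul_sub, sub_mul, smul_mul_assoc, mul_smul_comm, mul_one,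
    one_mul, a4, m4, b3, n3, hMA _ b m4 b1, hMA _ n m4 n1, hMA m _ m2 b3, hMA m _ m2 n3,
    sub_self, smul_zero, add_zero]
  module

end Jordan

theorem jordan_derivation_one_point_extension
    {K : Type*} [Field K] {Λ : Type*} [Ring Λ] [Algebra K Λ]
    (hchar : ringChar K ≠ 2)
    (e : Λ) (he : e * e = e)
    (htri : ∀ x : Λ, (1 - e) * x * e = 0)
    (hone : ∀ x : Λ, ∃ k : K, (1 - e) * x * (1 - e) = k • (1 - e))
    (hA : ∀ d : corner K e he →ₗ[K] corner K e he,
      (∀ u v : corner K e he, d (u * v + v * u) = d u * v + v * d u + u * d v + d v * u) →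
      (∀ u v : corner K e he, d (u * v) = d u * v + u * d v))
    (Θ : Λ →ₗ[K] Λ)
    (hJ : ∀ x y : Λ, Θ (x * y + y * x) = Θ x * y + y * Θ x + x * Θ y + Θ y * x) :
    ∀ x y : Λ, Θ (x * y) = Θ x * y + x * Θ y := by
  have htri' : ∀ x : Λ, x * e = e * x * e := fun x => by
    have h := htri x
    rw [sub_mul, sub_mul, one_mul] at h
    exact sub_eq_zero.mp h
  have h1 : Θ e = Θ e * e + e * Θ e := by
    have h := hJ e e
    rw [he, map_add] at h
    apply sub_eq_zero.mp
    apply two_cancel hchar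
    rw [sub_add_sub_comm, h]
    abel
  have h2 : Θ e * e = 0 := by
    have h := congrArg (fun z => e * z) h1
    simp only [mul_add, ← mul_assoc, he] at h
    rw [← htri' (Θ e)] at h
    exact right_eq_add.mp h
  have h3 : e * Θ e = Θ e := by
    rw [h2, zero_add] at h1
    exact h1.symm
  let D : Λ →ₗ[K] Λ := Θ - (LinearMap.mulRight K (Θ e) - LinearMap.mulLeft K (Θ e))
  have hD : ∀ x, D x = Θ x - (x * Θ e - Θ e * x) := fun x => rfl
  have hDJ : ∀ x y : Λ, D (x * y + y * x) = D x * y + y * D x + x * D y + D y * x := by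
    intro x y
    simp only [hD, hJ]
    simp only [mul_sub, sub_mul, mul_add, add_mul, mul_assoc]
    abel
  have hDe : D e = 0 := by rw [hD, h2, h3, sub_zero, sub_self]
  intro x y
  have h := jordan_normalized hchar e he htri' hone hA D hDJ hDe x y
  simp only [hD] at h
  rw [sub_eq_iff_eq_add.mp h]
  simp only [mul_sub, sub_mul, mul_assoc]
  abel
end

section
/- Suppose char K ≠ 2. Then every Jordan derivation Θ : T → T of the upper triangular matrix algebra T is a derivation: if Θ(x*y + y*x) = Θ(x)*y + y*Θ(x) + x*Θ(y) + Θ(y)*x for all x, y ∈ T, then Θ(x*y) = Θ(x)*y + x*Θ(y) for all x, y ∈ T. -/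
/-!
Let `e i` be the diagonal idempotents. The Jordan identity on the pairs `(e i, e j)` forces
`Θ (e i) = d * e i - e i * d`, where `d` is the upper triangular matrix whose `l`-th column is the
`l`-th column of `Θ (e l)` (`jordan_apply_idem`). Subtracting the inner derivation of `d`, one may
assume that `Θ` kills every `e i`. Then `Θ` commutes with the Peirce projections
`x ↦ e i * x * e j`, `i ≤ j`: for `i < j` this is the polarized identity
`Θ (e i x e j + e j x e i) = e i Θ(x) e j + e j Θ(x) e i`, where triangularity kills the terms
with `e j` on the left. Hence `Θ` multiplies the `(i, j)` entry by a scalar `c i j` with `c i i = 0`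
(`jordan_entry`). The Jordan identity on the matrix units `E i j`, `E j k` with `i < j < k` gives
`c i k = c i j + c j k` (`jordan_cocycle`), and this additivity is exactly the Leibniz rule.
-/

set_option synthInstance.maxHeartbeats 1000000
set_option maxHeartbeats 1000000

/-- The subalgebra of upper triangular matrices in `Matrix (Fin n) (Fin n) K`. -/
def UT (K : Type*) [Field K] (n : ℕ) : Subalgebra K (Matrix (Fin n) (Fin n) K) where
  carrier := {M | M.BlockTriangular id}
  mul_mem' := fun ha hb => ha.mul hb
  add_mem' := fun ha hb => ha.add hb
  algebraMap_mem' := fun r i j hij => by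
    rw [Matrix.algebraMap_matrix_apply, if_neg]
    intro h
    subst h
    exact lt_irrefl _ hij

/-- The matrix unit `E i j` of the upper triangular algebra, for `i ≤ j`. -/
def UT.unit (K : Type*) [Field K] {n : ℕ} (i j : Fin n) (h : i ≤ j) : UT K n :=
  ⟨Matrix.single i j 1, fun a b hab => by
    rw [Matrix.single_apply, if_neg]
    rintro ⟨rfl, rfl⟩
    exact absurd hab (not_lt.mpr h)⟩

/-- The diagonal idempotent `e i = E i i`. -/
def UT.idem (K : Type*) [Field K] {n : ℕ} (i : Fin n) : UT K n := UT.unit K i i le_rfl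

namespace UT

variable {K : Type*} [Field K] {n : ℕ}

theorem coe_mul_apply (x y : UT K n) (k l : Fin n) :
    (x * y).1 k l = ∑ m, x.1 k m * y.1 m l := rfl

theorem coe_add_apply (x y : UT K n) (k l : Fin n) :
    (x + y).1 k l = x.1 k l + y.1 k l := rfl

theorem coe_sub_apply (x y : UT K n) (k l : Fin n) :
    (x - y).1 k l = x.1 k l - y.1 k l := rfl

theorem coe_smul_apply (c : K) (x : UT K n) (k l : Fin n) :
    (c • x).1 k l = c * x.1 k l := rfl

theorem coe_zero_apply (k l : Fin n) : (0 : UT K n).1 k l = 0 := rfl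

theorem apply_of_lt (x : UT K n) {k l : Fin n} (h : l < k) : x.1 k l = 0 := x.2 h

theorem unit_apply (i j : Fin n) (h : i ≤ j) (k l : Fin n) :
    (unit K i j h).1 k l = if i = k ∧ j = l then 1 else 0 :=
  Matrix.single_apply ..

theorem mul_unit_apply (x : UT K n) (i j : Fin n) (h : i ≤ j) (k l : Fin n) :
    (x * unit K i j h).1 k l = if j = l then x.1 k i else 0 := by
  rw [coe_mul_apply, Finset.sum_eq_single i]
  · simp [unit_apply]
  · intro b _ hb
    simp [unit_apply, hb.symm]
  · simp

theorem unit_mul_apply (x : UT K n) (i j : Fin n) (h : i ≤ j) (k l : Fin n) :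
    (unit K i j h * x).1 k l = if i = k then x.1 j l else 0 := by
  rw [coe_mul_apply, Finset.sum_eq_single j]
  · simp [unit_apply]
  · intro b _ hb
    simp [unit_apply, hb.symm]
  · simp

theorem mul_idem_apply (x : UT K n) (i k l : Fin n) :
    (x * idem K i).1 k l = if i = l then x.1 k i else 0 := mul_unit_apply ..

theorem idem_mul_apply (x : UT K n) (i k l : Fin n) :
    (idem K i * x).1 k l = if i = k then x.1 i l else 0 := unit_mul_apply ..

theorem ext' {x y : UT K n} (h : ∀ k l, x.1 k l = y.1 k l) : x = y :=
  Subtype.ext (Matrix.ext h)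

theorem idem_mul_self (i : Fin n) : idem K i * idem K i = idem K i := by
  apply ext'
  intro k l
  rw [idem_mul_apply, idem, unit_apply, unit_apply]
  split_ifs <;> grind

theorem idem_mul_idem {i j : Fin n} (h : i ≠ j) : idem K i * idem K j = 0 := by
  apply ext'
  intro k l
  rw [idem_mul_apply, idem, unit_apply, coe_zero_apply]
  split_ifs <;> simp_all

theorem idem_mul_mul_idem (x : UT K n) (i j : Fin n) (h : i ≤ j) :
    idem K i * x * idem K j = x.1 i j • unit K i j h := by
  apply ext'
  intro k l
  rw [mul_idem_apply, idem_mul_apply, coe_smul_apply, unit_apply]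
  split_ifs <;> simp_all

theorem idem_mul_mul_idem_of_lt (x : UT K n) {i j : Fin n} (h : i < j) :
    idem K j * x * idem K i = 0 := by
  apply ext'
  intro k l
  rw [mul_idem_apply, idem_mul_apply, coe_zero_apply, apply_of_lt x h]
  simp

end UT

open UT in
/-- A Jordan derivation agrees on the diagonal idempotents with an inner derivation. -/
theorem jordan_apply_idem {K : Type*} [Field K] {n : ℕ} (h2 : (2 : K) ≠ 0)
    (Θ : UT K n →ₗ[K] UT K n)
    (hJ : ∀ x y : UT K n, Θ (x * y + y * x) = Θ x * y + y * Θ x + x * Θ y + Θ y * x) :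
    ∃ d : UT K n, ∀ i, Θ (idem K i) = d * idem K i - idem K i * d := by
  have hself : ∀ i k l : Fin n, (Θ (idem K i)).1 k l =
      (if i = l then (Θ (idem K i)).1 k i else 0) +
      (if i = k then (Θ (idem K i)).1 i l else 0) := by
    intro i k l
    have h := congrArg (fun z : UT K n => z.1 k l) (hJ (idem K i) (idem K i))
    simp only [idem_mul_self, map_add, coe_add_apply, mul_idem_apply, idem_mul_apply] at h
    apply mul_left_cancel₀ h2
    linear_combination h
  have hpair : ∀ i j : Fin n, i ≠ j →
      (Θ (idem K i)).1 i j + (Θ (idem K j)).1 i j = 0 := by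
    intro i j hij
    have h := congrArg (fun z : UT K n => z.1 i j) (hJ (idem K i) (idem K j))
    simp only [idem_mul_idem hij, idem_mul_idem hij.symm, add_zero, map_zero, coe_add_apply,
      mul_idem_apply, idem_mul_apply, coe_zero_apply, if_true, if_neg hij, if_neg hij.symm] at h
    linear_combination -h
  refine ⟨⟨Matrix.of fun k l => (Θ (idem K l)).1 k l, fun k l h => apply_of_lt _ h⟩, ?_⟩
  intro i
  apply ext'
  intro k l
  rw [coe_sub_apply, mul_idem_apply, idem_mul_apply, hself]
  simp only [Matrix.of_apply]
  by_cases hk : i = k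
  · by_cases hl : i = l
    · subst hk hl
      -- the diagonal entry `t` of `Θ (e i)` at `i` satisfies `t = t + t`
      have := hself i i i
      simp only [if_true] at this ⊢
      linear_combination -2 * this
    · subst hk
      simp only [if_true, if_neg hl]
      linear_combination hpair i l hl
  · simp [hk]

open UT in
/-- A Jordan derivation killing the diagonal idempotents rescales each matrix entry. -/
theorem jordan_entry {K : Type*} [Field K] {n : ℕ} (h2 : (2 : K) ≠ 0)
    (Θ : UT K n →ₗ[K] UT K n)
    (hJ : ∀ x y : UT K n, Θ (x * y + y * x) = Θ x * y + y * Θ x + x * Θ y + Θ y * x)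
    (h0 : ∀ i, Θ (idem K i) = 0) (x : UT K n) (i j : Fin n) (h : i ≤ j) :
    (Θ x).1 i j = x.1 i j * (Θ (unit K i j h)).1 i j := by
  have hP : ∀ (z : UT K n) (i : Fin n), Θ (idem K i * z + z * idem K i) =
      idem K i * Θ z + Θ z * idem K i := by
    intro z i
    rw [hJ, h0]
    simp
  have key : Θ (idem K i * x * idem K j) = idem K i * Θ x * idem K j := by
    have e := hP (idem K i * x + x * idem K i) j
    rw [hP x i] at e
    rcases h.eq_or_lt with rfl | hlt
    · have a : ∀ z : UT K n, idem K i * (idem K i * z + z * idem K i) +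
          (idem K i * z + z * idem K i) * idem K i =
          (idem K i * z + z * idem K i) + (2 : K) • (idem K i * z * idem K i) := by
        intro z
        rw [mul_add, add_mul, ← mul_assoc, idem_mul_self, ← mul_assoc, mul_assoc z,
          idem_mul_self, two_smul]
        abel
      rw [a, a, map_add, hP, map_smul] at e
      exact smul_right_injective _ h2 (add_left_cancel e)
    · have a : ∀ z : UT K n, idem K j * (idem K i * z + z * idem K i) +
          (idem K i * z + z * idem K i) * idem K j = idem K i * z * idem K j := by
        intro z
        rw [mul_add, add_mul, ← mul_assoc, idem_mul_idem hlt.ne', ← mul_assoc, mul_assoc z,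
          idem_mul_idem hlt.ne, idem_mul_mul_idem_of_lt _ hlt]
        simp
      rwa [a, a] at e
  have e := congrArg (fun z : UT K n => z.1 i j) key
  rw [idem_mul_mul_idem x i j h, idem_mul_mul_idem _ i j h, map_smul] at e
  simp only [coe_smul_apply, unit_apply] at e
  simpa using e.symm

open UT in
theorem jordan_cocycle {K : Type*} [Field K] {n : ℕ} (h2 : (2 : K) ≠ 0)
    (Θ : UT K n →ₗ[K] UT K n)
    (hJ : ∀ x y : UT K n, Θ (x * y + y * x) = Θ x * y + y * Θ x + x * Θ y + Θ y * x)
    (h0 : ∀ i, Θ (idem K i) = 0) {i j k : Fin n} (hij : i ≤ j) (hjk : j ≤ k) :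
    (Θ (unit K i k (hij.trans hjk))).1 i k =
      (Θ (unit K i j hij)).1 i j + (Θ (unit K j k hjk)).1 j k := by
  have hd : ∀ i, Θ (unit K i i le_rfl) = 0 := h0
  rcases hij.eq_or_lt with rfl | h1
  · rw [hd, coe_zero_apply, zero_add]
  rcases hjk.eq_or_lt with rfl | h3
  · rw [hd, coe_zero_apply, add_zero]
  have e := congrArg (fun z : UT K n => z.1 i k) (hJ (unit K i j hij) (unit K j k hjk))
  beta_reduce at e
  rw [jordan_entry h2 Θ hJ h0 _ i k (hij.trans hjk)] at e
  simpa [coe_add_apply, mul_unit_apply, unit_mul_apply, unit_apply, h1.ne, h1.ne', h3.ne,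
    h3.ne'] using e

open UT in
theorem jordan_normalized_s7 {K : Type*} [Field K] {n : ℕ} (h2 : (2 : K) ≠ 0)
    (Θ : UT K n →ₗ[K] UT K n)
    (hJ : ∀ x y : UT K n, Θ (x * y + y * x) = Θ x * y + y * Θ x + x * Θ y + Θ y * x)
    (h0 : ∀ i, Θ (idem K i) = 0) (x y : UT K n) :
    Θ (x * y) = Θ x * y + x * Θ y := by
  apply ext'
  intro i k
  rcases lt_or_ge k i with h | h
  · rw [apply_of_lt _ h, apply_of_lt _ h]
  rw [jordan_entry h2 Θ hJ h0 _ i k h, coe_add_apply, coe_mul_apply, coe_mul_apply, coe_mul_apply,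
    Finset.sum_mul, ← Finset.sum_add_distrib]
  refine Finset.sum_congr rfl fun j _ => ?_
  rcases lt_or_ge j i with hij | hij
  · simp [apply_of_lt _ hij]
  rcases lt_or_ge k j with hjk | hjk
  · simp [apply_of_lt _ hjk]
  rw [jordan_entry h2 Θ hJ h0 x i j hij, jordan_entry h2 Θ hJ h0 y j k hjk,
    jordan_cocycle h2 Θ hJ h0 hij hjk]
  ring

theorem jordan_derivation_upper_triangular_is_derivation
    {K : Type*} [Field K] {n : ℕ} (hn : 0 < n)
    (hchar : ringChar K ≠ 2)
    (Θ : UT K n →ₗ[K] UT K n)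
    (hJ : ∀ x y : UT K n, Θ (x * y + y * x) = Θ x * y + y * Θ x + x * Θ y + Θ y * x) :
    ∀ x y : UT K n, Θ (x * y) = Θ x * y + x * Θ y := by
  have h2 : (2 : K) ≠ 0 := Ring.two_ne_zero hchar
  obtain ⟨d, hd⟩ := jordan_apply_idem h2 Θ hJ
  let D : UT K n →ₗ[K] UT K n := Θ - (LinearMap.mulLeft K d - LinearMap.mulRight K d)
  have hD : ∀ z, D z = Θ z - (d * z - z * d) := fun z => rfl
  intro x y
  have h := jordan_normalized_s7 h2 D
    (fun x y => by
      rw [hD, hD, hD, hJ]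
      simp only [mul_add, add_mul, mul_sub, sub_mul, mul_assoc]
      abel)
    (fun i => by rw [hD, hd, sub_self]) x y
  rw [hD, hD, hD] at h
  rw [sub_eq_iff_eq_add.mp h]
  simp only [mul_sub, sub_mul, mul_assoc]
  abel
end

section
/- Suppose char K ≠ 2. If Θ : T → T is a derivation of the upper triangular matrix algebra T whose values are central, i.e. Θ(x)*y = y*Θ(x) for all x, y ∈ T, then Θ = 0. -/
/-!
A central-valued derivation `Θ` kills every idempotent `e`: from `Θ e = 2 e Θ(e)`, multiplying by `e`
gives `e Θ(e) = 0`, hence `Θ e = 0`. In particular `Θ E_ii = 0`, so `Θ` is linear over multiplication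
by `E_ii` on both sides, and for every `M`, using centrality,
`Θ(M) E_ii = E_ii Θ(M) E_ii = Θ(E_ii M E_ii) = M_ii Θ(E_ii) = 0`.
This says that each column of `Θ(M)` vanishes.
-/

set_option synthInstance.maxHeartbeats 1000000
set_option maxHeartbeats 1000000

/-- The diagonal matrix unit `E_ii`, as an upper triangular matrix. -/
def UT.diagUnit (K : Type*) [Field K] {n : ℕ} (i : Fin n) : UT K n :=
  ⟨Matrix.single i i 1, Matrix.blockTriangular_single le_rfl 1⟩

theorem UT.diagUnit_mul_self {K : Type*} [Field K] {n : ℕ} (i : Fin n) :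
    UT.diagUnit K i * UT.diagUnit K i = UT.diagUnit K i := by
  apply Subtype.ext
  simp [UT.diagUnit]

theorem UT.diagUnit_mul_mul {K : Type*} [Field K] {n : ℕ} (i : Fin n) (M : UT K n) :
    UT.diagUnit K i * M * UT.diagUnit K i = M.1 i i • UT.diagUnit K i := by
  apply Subtype.ext
  simp [UT.diagUnit]

theorem central_valued_derivation_upper_triangular_is_zero
    {K : Type*} [Field K] {n : ℕ} (hn : 0 < n)
    (hchar : ringChar K ≠ 2)
    (Θ : UT K n →ₗ[K] UT K n)
    (hder : ∀ x y : UT K n, Θ (x * y) = Θ x * y + x * Θ y)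
    (hcentral : ∀ x y : UT K n, Θ x * y = y * Θ x) :
    Θ = 0 := by
  have hidem : ∀ i, Θ (UT.diagUnit K i) = 0 := by
    intro i
    have hee := UT.diagUnit_mul_self (K := K) i
    set e := UT.diagUnit K i
    have h1 : Θ e = e * Θ e + e * Θ e := by
      have := hder e e
      rwa [hee, hcentral e e] at this
    have h2 : e * Θ e = e * Θ e + e * Θ e := by
      have := congrArg (e * ·) h1
      simpa only [mul_add, ← mul_assoc, hee] using this
    have h3 : e * Θ e = 0 := left_eq_add.mp h2
    rw [h1, h3, add_zero]
  refine LinearMap.ext fun M => Subtype.ext (Matrix.ext fun a i => ?_)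
  have hcol : Θ M * UT.diagUnit K i = 0 := by
    have hee := UT.diagUnit_mul_self (K := K) i
    have h : Θ (UT.diagUnit K i * M * UT.diagUnit K i)
        = UT.diagUnit K i * Θ M * UT.diagUnit K i := by
      rw [hder, hder, hidem, zero_mul, zero_add, mul_zero, add_zero]
    rw [UT.diagUnit_mul_mul, map_smul, hidem, smul_zero, ← hcentral, mul_assoc, hee] at h
    exact h.symm
  have := congrFun (congrFun (congrArg Subtype.val hcol) a) i
  simpa [UT.diagUnit] using this
end

section
/- Suppose char K ≠ 2 and that for every x ∈ Λ there exists k ∈ K with f*x*f = k • f. Let A := {x ∈ Λ | e*x*e = x}, a non-unital subalgebra of Λ with multiplicative identity e. Assume that every K-linear map d : A → A satisfying d(u*v) = d(u)*v + u*d(v) for all u, v ∈ A and d(u)*v = v*d(u) for all u, v ∈ A is identically zero (every central-valued derivation of A vanishes). Then every derivation Θ of Λ satisfying Θ(x)*y = y*Θ(x) for all x, y ∈ Λ is identically zero. -/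
/-!
A central-valued derivation `Θ` kills `e`: from `Θ e = Θ e * e + e * Θ e = 2 • (e * Θ e)`, left
multiplication by `e` gives `e * Θ e = 0`, hence `Θ e = 0`, and so `Θ (1 - e) = 0`. With
`f = 1 - e`, this gives `Θ (f * x * f) = f * Θ x * f = Θ x * f`. As `f * x * f` is a scalar multiple
of `f`, it follows that `Θ x * f = 0`. Therefore `Θ x = e * Θ x * e = Θ (e * x * e)`, so `Θ`
preserves the corner `eΛe`, is determined by its restriction to it, and that restriction is a
central-valued derivation, which vanishes by assumption.
-/

set_option synthInstance.maxHeartbeats 1000000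
set_option maxHeartbeats 1000000

theorem central_valued_derivation_one_point_extension_is_zero
    {K : Type*} [Field K] {Λ : Type*} [Ring Λ] [Algebra K Λ]
    (hchar : ringChar K ≠ 2)
    (e : Λ) (he : e * e = e)
    (htri : ∀ x : Λ, (1 - e) * x * e = 0)
    (hone : ∀ x : Λ, ∃ k : K, (1 - e) * x * (1 - e) = k • (1 - e))
    (hA : ∀ d : corner K e he →ₗ[K] corner K e he,
      (∀ u v : corner K e he, d (u * v) = d u * v + u * d v) →
      (∀ u v : corner K e he, d u * v = v * d u) →
      d = 0)
    (Θ : Λ →ₗ[K] Λ)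
    (hder : ∀ x y : Λ, Θ (x * y) = Θ x * y + x * Θ y)
    (hcentral : ∀ x y : Λ, Θ x * y = y * Θ x) :
    Θ = 0 := by
  have he0 : Θ e = 0 := by
    have h1 : Θ e = Θ e * e + e * Θ e := by rw [← hder, he]
    have h2 : Θ e = e * Θ e + e * Θ e := by rwa [hcentral e e] at h1
    have h3 : e * Θ e = e * Θ e + e * Θ e := by
      conv_lhs => rw [h2]
      rw [mul_add, ← mul_assoc, he]
    have h4 : e * Θ e = 0 := by simpa using h3
    rw [h2, h4, add_zero]
  have hone0 : Θ 1 = 0 := by simpa using hder 1 1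
  have hf0 : Θ (1 - e) = 0 := by rw [map_sub, hone0, he0, sub_zero]
  have hff : (1 - e) * (1 - e) = 1 - e := by
    rw [mul_sub, mul_one, sub_mul, one_mul, he, sub_self, sub_zero]
  have hxf : ∀ x, Θ x * (1 - e) = 0 := by
    intro x
    obtain ⟨k, hk⟩ := hone x
    have h := congrArg Θ hk
    rwa [hder, hder, hf0, map_smul, hf0, smul_zero, zero_mul, zero_add, mul_zero, add_zero,
      ← hcentral x (1 - e), mul_assoc, hff] at h
  have hxe : ∀ x, Θ x * e = Θ x := by
    intro x
    have h := hxf x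
    rw [mul_sub, mul_one, sub_eq_zero] at h
    exact h.symm
  have hex : ∀ x, e * Θ x * e = Θ x := by
    intro x
    rw [← hcentral x e, hxe, hxe]
  have hcorner : ∀ x, Θ (e * x * e) = Θ x := by
    intro x
    rw [hder, hder, he0, zero_mul, zero_add, mul_zero, add_zero, hex]
  let d : corner K e he →ₗ[K] corner K e he :=
    { toFun := fun u => ⟨Θ u, hex u⟩
      map_add' := fun u v => Subtype.ext (map_add Θ (u : Λ) (v : Λ))
      map_smul' := fun k u => Subtype.ext (map_smul Θ k (u : Λ)) }
  have hd : d = 0 := hA d (fun u v => Subtype.ext (hder u v))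
    (fun u v => Subtype.ext (hcentral u v))
  ext x
  have hmem : e * (e * x * e) * e = e * x * e := by
    rw [mul_assoc e x e, ← mul_assoc e e, he, mul_assoc e (x * e) e, mul_assoc x e e, he]
  have h := congrArg Subtype.val (LinearMap.congr_fun hd (⟨e * x * e, hmem⟩ : corner K e he))
  rw [← hcorner x]
  exact h
end

section
/- Suppose char K ≠ 2. Let F, d : T → T be K-linear maps such that F(x*y + y*x) = F(x)*y + y*F(x) + x*d(y) + d(y)*x for all x, y ∈ T (F is a Jordan generalized derivation of T with associated map d). Then F is a generalized derivation: there exists a K-linear map d' : T → T with d'(x*y) = d'(x)*y + x*d'(y) for all x, y ∈ T (a derivation) such that F(x*y) = F(x)*y + x*d'(y) for all x, y ∈ T. -/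
/-!
Write `x ∘ y = x * y + y * x` and `c = F 1`. Taking `x = y = 1` and then `x = 1` in the hypothesis
gives `d 1 = 0` and `2 F y = c ∘ y + 2 d y`. Substituting this back with `x = y = e` idempotent, the
corner `e (·) (1 - e)` of the resulting identity loses every term in `d` and leaves
`e c (1 - e) = 0`; likewise `(1 - e) c e = 0`. So `c` commutes with every idempotent, and since the
idempotents `E i i` and `E i i + E i j` (`i < j`) span the algebra, `c` is central. Hence
`F x = c x + d x`, and `d` is a Jordan derivation; it remains to see that a Jordan derivation of the
upper triangular matrices is a derivation (`UT.jordan_derivation`).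

For this, subtract from `d` the inner derivation given by `a = ∑ k, d (E k k) * E k k`, which agrees
with `d` on all `E i i`. A Jordan derivation `δ` killing every `E i i` satisfies
`δ (E i j) = E i i ∘ δ (E i j) = E j j ∘ δ (E i j)`, which together with triangularity forces
`δ (E i j) = l i j • E i j`. Applying `δ` to `E i j ∘ E j k = E i k` gives
`l i k = l i j + l j k`, so `δ` is a derivation on matrix units.
-/

set_option synthInstance.maxHeartbeats 1000000
set_option maxHeartbeats 1000000

namespace UT

variable {K : Type*} [Field K] {n : ℕ}

/-! ### Matrix units in the upper triangular algebra -/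

/-- The matrix unit `E i j` as an element of the upper triangular algebra; it is `0` when `j < i`. -/
def E (K : Type*) [Field K] {n : ℕ} (i j : Fin n) : UT K n :=
  if h : i ≤ j then ⟨Matrix.single i j 1, fun p q hpq => by
    rw [Matrix.single_apply, if_neg]
    rintro ⟨rfl, rfl⟩
    exact absurd hpq (not_lt.2 h)⟩ else 0

lemma coe_E {i j : Fin n} (h : i ≤ j) :
    (E K i j : Matrix (Fin n) (Fin n) K) = Matrix.single i j 1 := by
  simp [E, h]

lemma E_mul_E {i j k : Fin n} (h : i ≤ j) (h' : j ≤ k) : E K i j * E K j k = E K i k := by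
  apply Subtype.ext
  simp [coe_E, h, h', h.trans h']

lemma E_mul_E_of_ne {i j k l : Fin n} (h : j ≠ k) : E K i j * E K k l = 0 := by
  by_cases h1 : i ≤ j
  · by_cases h2 : k ≤ l
    · apply Subtype.ext
      simp [coe_E, h1, h2, h]
    · simp [E, h2]
  · simp [E, h1]

lemma apply_eq_zero (x : UT K n) {i j : Fin n} (h : j < i) : x.1 i j = 0 := x.2 h

lemma eq_sum (x : UT K n) : x = ∑ i, ∑ j, x.1 i j • E K i j := by
  apply Subtype.ext
  conv_lhs => rw [Matrix.matrix_eq_sum_single x.1]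
  simp only [AddSubmonoidClass.coe_finsetSum]
  refine Finset.sum_congr rfl fun i _ => Finset.sum_congr rfl fun j _ => ?_
  rcases le_or_gt i j with h | h
  · simp [coe_E h]
  · simp [apply_eq_zero x h]

lemma induction {P : UT K n → Prop} (h0 : P 0) (hadd : ∀ x y, P x → P y → P (x + y))
    (hsmul : ∀ (r : K) x, P x → P (r • x)) (hE : ∀ i j, i ≤ j → P (E K i j)) (x : UT K n) : P x := by
  rw [eq_sum x]
  refine Finset.sum_induction _ P hadd h0 fun i _ => Finset.sum_induction _ P hadd h0 fun j _ => ?_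
  rcases le_or_gt i j with h | h
  · exact hsmul _ _ (hE i j h)
  · rw [apply_eq_zero x h, zero_smul]
    exact h0

lemma sum_E : ∑ i, E K i i = (1 : UT K n) := by
  apply Subtype.ext
  simp only [AddSubmonoidClass.coe_finsetSum, coe_E le_rfl]
  exact Matrix.sum_single_one

lemma add_self_cancel (h2 : (2 : K) ≠ 0) {x y : UT K n} (h : x + x = y + y) : x = y := by
  rw [← two_smul K, ← two_smul K] at h
  exact smul_right_injective _ h2 h

lemma E_mul_apply (i p q : Fin n) (y : UT K n) :
    (E K i i * y).1 p q = if p = i then y.1 p q else 0 := by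
  rw [MulMemClass.coe_mul, coe_E le_rfl]
  split_ifs with h
  · subst h; simp
  · exact Matrix.single_mul_apply_of_ne _ _ _ _ _ h _

lemma mul_E_apply (i p q : Fin n) (y : UT K n) :
    (y * E K i i).1 p q = if q = i then y.1 p q else 0 := by
  rw [MulMemClass.coe_mul, coe_E le_rfl]
  split_ifs with h
  · subst h; simp
  · exact Matrix.mul_single_apply_of_ne _ _ _ _ _ h _

/-- The two Peirce conditions and triangularity leave only the `(i, j)` entry. -/
lemma eq_smul_E {i j : Fin n} (hij : i < j) {y : UT K n}
    (h1 : y = E K i i * y + y * E K i i) (h2 : y = E K j j * y + y * E K j j) :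
    y = y.1 i j • E K i j := by
  apply Subtype.ext
  ext p q
  have e1 := congrArg (fun z : UT K n => z.1 p q) h1
  have e2 := congrArg (fun z : UT K n => z.1 p q) h2
  simp only [AddMemClass.coe_add, Matrix.add_apply, E_mul_apply, mul_E_apply] at e1 e2
  have e3 : q < p → y.1 p q = 0 := apply_eq_zero y
  simp only [SetLike.val_smul, coe_E hij.le, Matrix.smul_apply, Matrix.single_apply, smul_eq_mul]
  by_cases hp : i = p
  · by_cases hq : j = q
    · subst hp hq; simp
    · have : p ≠ j := by rintro rfl; exact hij.ne hp
      rw [if_neg this, if_neg (Ne.symm hq)] at e2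
      simpa [hq] using e2
  · rw [if_neg (Ne.symm hp)] at e1
    by_cases hq : q = i
    · by_cases hp' : p = j
      · subst hq hp'
        simp [hp, e3 hij]
      · have : q ≠ j := by rintro rfl; exact hij.ne hq.symm
        rw [if_neg hp', if_neg this] at e2
        simpa [hp] using e2
    · rw [if_neg hq] at e1
      simpa [hp] using e1

/-! ### Jordan derivations -/

/-- It suffices to check the Leibniz rule on matrix units. -/
lemma leibniz_of_E (δ : UT K n →ₗ[K] UT K n)
    (h : ∀ i j k l, i ≤ j → k ≤ l →
      δ (E K i j * E K k l) = δ (E K i j) * E K k l + E K i j * δ (E K k l)) (x y : UT K n) :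
    δ (x * y) = δ x * y + x * δ y := by
  induction x using UT.induction with
  | h0 => simp
  | hadd x x' hx hx' => simp only [add_mul, map_add, hx, hx']; abel
  | hsmul r x hx => simp only [smul_mul_assoc, map_smul, hx, smul_add]
  | hE i j hij =>
    induction y using UT.induction with
    | h0 => simp
    | hadd x x' hx hx' => simp only [mul_add, map_add, hx, hx']; abel
    | hsmul r x hx => simp only [mul_smul_comm, map_smul, hx, smul_add]
    | hE k l hkl => exact h i j k l hij hkl

/-- A Jordan derivation that kills the diagonal matrix units is a derivation. -/
lemma jordan_derivation_of_diag (δ : UT K n →ₗ[K] UT K n)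
    (hδ : ∀ x y, δ (x * y + y * x) = δ x * y + y * δ x + x * δ y + δ y * x)
    (h0 : ∀ i, δ (E K i i) = 0) (x y : UT K n) : δ (x * y) = δ x * y + x * δ y := by
  have key : ∀ i j : Fin n, i ≤ j → ∃ l : K, δ (E K i j) = l • E K i j := by
    intro i j hij
    rcases hij.eq_or_lt with rfl | hij'
    · exact ⟨0, by simp [h0]⟩
    · refine ⟨_, eq_smul_E hij' ?_ ?_⟩
      · have := hδ (E K i i) (E K i j)
        rwa [E_mul_E le_rfl hij, E_mul_E_of_ne hij'.ne', h0, add_zero, zero_mul, mul_zero, add_zero,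
          zero_add] at this
      · have := hδ (E K j j) (E K i j)
        rwa [E_mul_E hij le_rfl, E_mul_E_of_ne hij'.ne', h0, zero_add, zero_mul, mul_zero, add_zero,
          zero_add] at this
  refine leibniz_of_E δ (fun i j k l hij hkl => ?_) x y
  obtain ⟨r, hr⟩ := key i j hij
  obtain ⟨s, hs⟩ := key k l hkl
  by_cases hjk : j = k
  · subst hjk
    rcases hij.eq_or_lt with rfl | hij'
    · rw [h0, E_mul_E le_rfl hkl, hs, mul_smul_comm, E_mul_E le_rfl hkl]; simp
    rcases hkl.eq_or_lt with rfl | hkl'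
    · rw [h0, E_mul_E hij le_rfl, hr, smul_mul_assoc, E_mul_E hij le_rfl]; simp
    -- Here `i < j < l`, so `E j l * E i j = 0` and the Jordan identity is the Leibniz rule.
    have hz : E K j l * E K i j = 0 := E_mul_E_of_ne (hij'.trans hkl').ne'
    have := hδ (E K i j) (E K j l)
    rw [hz, add_zero] at this
    rw [this, hr, hs]
    simp [hz]
  · simp [hr, hs, E_mul_E_of_ne hjk]

/-- A Jordan derivation of the upper triangular matrices is a derivation. -/
lemma jordan_derivation (d : UT K n →ₗ[K] UT K n) (h2 : (2 : K) ≠ 0)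
    (hd : ∀ x y, d (x * y + y * x) = d x * y + y * d x + x * d y + d y * x) (x y : UT K n) :
    d (x * y) = d x * y + x * d y := by
  obtain ⟨a, ha⟩ : ∃ a, ∀ i, d (E K i i) = a * E K i i - E K i i * a := by
    refine ⟨∑ k, d (E K k k) * E K k k, fun j => ?_⟩
    have hee : ∀ i : Fin n, E K i i * E K i i = E K i i := fun i => E_mul_E le_rfl le_rfl
    have h1 : d (E K j j) = d (E K j j) * E K j j + E K j j * d (E K j j) := by
      apply add_self_cancel h2
      have := hd (E K j j) (E K j j)
      rw [hee, map_add] at this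
      rw [this]; abel
    have h3 : E K j j * d (E K j j) * E K j j = 0 := by
      have := congrArg (fun z => E K j j * z * E K j j) h1
      simp only [mul_add, add_mul] at this
      rw [← mul_assoc, ← mul_assoc, mul_assoc _ (E K j j) (E K j j), hee] at this
      simpa using this
    -- The `(j, k)` corner of the Jordan identity for the orthogonal idempotents `E j j`, `E k k`.
    have h4 : ∀ k, k ≠ j → E K j j * d (E K k k) * E K k k = - (E K j j * d (E K j j) * E K k k) := by
      intro k hk
      have hz : E K j j * E K k k = 0 := E_mul_E_of_ne hk.symm
      have hz' : E K k k * E K j j = 0 := E_mul_E_of_ne hk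
      have h5 := congrArg (fun z => E K j j * z * E K k k) (hd (E K j j) (E K k k))
      simp only [hz, hz', map_zero, add_zero, mul_zero, zero_mul, mul_add, add_mul] at h5
      have t1 : E K j j * (d (E K j j) * E K k k) * E K k k = E K j j * d (E K j j) * E K k k := by
        rw [← mul_assoc, mul_assoc _ (E K k k), hee]
      have t2 : E K j j * (E K k k * d (E K j j)) * E K k k = 0 := by
        rw [← mul_assoc, hz]; simp
      have t3 : E K j j * (E K j j * d (E K k k)) * E K k k = E K j j * d (E K k k) * E K k k := by
        rw [← mul_assoc, hee]
      have t4 : E K j j * (d (E K k k) * E K j j) * E K k k = 0 := by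
        rw [mul_assoc, mul_assoc, hz]; simp
      rw [t1, t2, t3, t4] at h5
      rw [eq_neg_iff_add_eq_zero, h5]; abel
    have h6 : (∑ k, d (E K k k) * E K k k) * E K j j = d (E K j j) * E K j j := by
      rw [Finset.sum_mul, Finset.sum_eq_single j]
      · rw [mul_assoc, hee]
      · intro k _ hk
        rw [mul_assoc, E_mul_E_of_ne hk, mul_zero]
      · simp
    have h7 : E K j j * (∑ k, d (E K k k) * E K k k) = - (E K j j * d (E K j j)) := by
      calc E K j j * (∑ k, d (E K k k) * E K k k)
          = ∑ k, - (E K j j * d (E K j j) * E K k k) := by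
            rw [Finset.mul_sum]
            refine Finset.sum_congr rfl fun k _ => ?_
            rw [← mul_assoc]
            by_cases hk : k = j
            · subst hk; rw [h3, neg_zero]
            · exact h4 k hk
        _ = _ := by rw [Finset.sum_neg_distrib, ← Finset.mul_sum, sum_E, mul_one]
    rw [h6, h7, sub_neg_eq_add]
    exact h1
  have h := jordan_derivation_of_diag
    (d - (LinearMap.mulLeft K a - LinearMap.mulRight K a))
    (fun x y => by
      simp only [LinearMap.sub_apply, LinearMap.mulLeft_apply, LinearMap.mulRight_apply, hd]
      simp only [mul_sub, sub_mul, mul_add, add_mul, mul_assoc]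
      abel)
    (fun i => by
      simp only [LinearMap.sub_apply, LinearMap.mulLeft_apply, LinearMap.mulRight_apply]
      rw [sub_eq_zero, ha]) x y
  simp only [LinearMap.sub_apply, LinearMap.mulLeft_apply, LinearMap.mulRight_apply] at h
  rw [sub_eq_iff_eq_add] at h
  rw [h]
  simp only [mul_sub, sub_mul, mul_add, add_mul, mul_assoc]
  abel

/-! ### Elements commuting with idempotents -/

/-- The idempotents span, so an element commuting with them is central. -/
lemma central_of_idem (c : UT K n) (h : ∀ e : UT K n, e * e = e → c * e = e * c) (x : UT K n) :
    c * x = x * c := by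
  induction x using UT.induction with
  | h0 => simp
  | hadd x y hx hy => rw [mul_add, add_mul, hx, hy]
  | hsmul r x hx => rw [mul_smul_comm, smul_mul_assoc, hx]
  | hE i j hij =>
    have hi : E K i i * E K i i = E K i i := E_mul_E le_rfl le_rfl
    have h1 := h _ hi
    rcases hij.eq_or_lt with rfl | hij'
    · exact h1
    · have h3 := h (E K i i + E K i j) (by
        rw [mul_add, add_mul, add_mul, hi, E_mul_E le_rfl hij, E_mul_E_of_ne hij'.ne',
          E_mul_E_of_ne hij'.ne']
        simp)
      rw [mul_add, add_mul, h1] at h3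
      exact add_left_cancel h3

end UT

theorem jordan_generalized_derivation_is_generalized_derivation
    {K : Type*} [Field K] {n : ℕ} (hn : 0 < n)
    (hchar : ringChar K ≠ 2)
    (F d : UT K n →ₗ[K] UT K n)
    (hF : ∀ x y : UT K n, F (x * y + y * x) = F x * y + y * F x + x * d y + d y * x) :
    ∃ d' : UT K n →ₗ[K] UT K n,
      (∀ x y : UT K n, d' (x * y) = d' x * y + x * d' y) ∧
      (∀ x y : UT K n, F (x * y) = F x * y + x * d' y) := by
  have h2 : (2 : K) ≠ 0 := Ring.two_ne_zero hchar
  have hd1 : d 1 = 0 := by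
    apply UT.add_self_cancel h2
    have := hF 1 1
    simp only [mul_one, one_mul, map_add, add_assoc] at this
    simpa using this
  obtain ⟨c, hc⟩ : ∃ c, c = F 1 := ⟨_, rfl⟩
  have hFd : ∀ y, F y + F y = c * y + y * c + (d y + d y) := by
    intro y
    have := hF 1 y
    simp only [mul_one, one_mul, map_add, ← hc] at this
    rw [this]; abel
  have hcen : ∀ x, c * x = x * c := by
    apply UT.central_of_idem
    intro e he
    have h1 : F e = F e * e + e * F e + (e * d e + d e * e) - F e := by
      have := hF e e
      rw [he, map_add] at this
      rw [eq_sub_iff_add_eq, this]; abel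
    -- Doubling the identity and eliminating `F` gives a relation between `c`, `d e` and `e`.
    have h3 : (F e + F e) + (F e + F e) = (F e + F e) * e + e * (F e + F e)
        + (e * d e + d e * e) + (e * d e + d e * e) := by
      rw [eq_sub_iff_add_eq] at h1
      calc (F e + F e) + (F e + F e) = (F e * e + e * F e + (e * d e + d e * e))
            + (F e * e + e * F e + (e * d e + d e * e)) := by rw [← h1]
        _ = _ := by noncomm_ring
    rw [hFd e] at h3
    have hel : ∀ z, e * (e * z) = e * z := fun z => by rw [← mul_assoc, he]
    have h4 := congrArg (fun z => e * z) h3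
    have h5 := congrArg (fun z => z * e) h3
    simp only [mul_add, add_mul, mul_assoc, hel, he] at h4 h5
    have h6 := congrArg (fun z => z * e) h4
    simp only [add_mul, mul_assoc, he] at h6
    -- `h6` is the common `e (·) e` part, so these are the two off-diagonal corners of `h3`.
    have h7 : e * c = e * (c * e) := by
      linear_combination (norm := abel) h4 - h6
    have h8 : c * e = e * (c * e) := by
      linear_combination (norm := abel) h5 - h6
    exact h8.trans h7.symm
  have hFc : ∀ y, F y = c * y + d y := by
    intro y
    apply UT.add_self_cancel h2
    rw [hFd, ← hcen y]; abel
  have hJ : ∀ x y, d (x * y + y * x) = d x * y + y * d x + x * d y + d y * x := by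
    intro x y
    have := hF x y
    rw [hFc, hFc] at this
    have hy : y * (c * x) = c * (y * x) := by rw [← mul_assoc, ← hcen, mul_assoc]
    simp only [mul_add, add_mul, hy, mul_assoc, map_add] at this ⊢
    rw [← add_right_inj (c * (x * y) + c * (y * x)), this]
    abel
  have hD := UT.jordan_derivation d h2 hJ
  refine ⟨d, hD, fun x y => ?_⟩
  rw [hFc, hFc, hD]
  noncomm_ring
end

section
/- Let Θ : Λ → Λ be a Lie derivation. Then for all x, y ∈ Λ: e*Θ(e*x*f)*e = 0 and f*Θ(e*x*f)*f = 0 (Θ maps the bimodule eΛf into itself modulo eΛf); f*Θ((e*x*e)*(e*y*e) - (e*y*e)*(e*x*e))*f = 0 and e*Θ((f*x*f)*(f*y*f) - (f*y*f)*(f*x*f))*e = 0 (the cross-corner components kill commutators); and (f*Θ(e*x*e)*f)*(f*y*f) = (f*y*f)*(f*Θ(e*x*e)*f) and (e*Θ(f*x*f)*e)*(e*y*e) = (e*y*e)*(e*Θ(f*x*f)*e) (the cross-corner components take central values in the opposite corner). -/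
/-!
Write `f = 1 - e`, so `e * f = f * e = 0`. Every claim is obtained by applying the Lie derivation
identity `Θ [a, b] = [Θ a, b] + [a, Θ b]` to a suitable pair and compressing by an idempotent:

* for `m = e * x * f` the pair is `(e, m)`, with `[e, m] = m`; compressing by `e` or by `f` kills
  the contribution of `[e, Θ m]`, and every term of `[Θ e, m]` contains a factor
  `f * _ * e`, which vanishes by triangularity;
* for two elements of one corner, compressing `Θ [a, b]` by the opposite idempotent `p` kills every
  term, since `a` and `b` annihilate `p` (`compress_commutator`);
* for elements of opposite corners `[a, b] = 0`, and compressing by the idempotent of the corner of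
  `b` leaves exactly `[p * Θ a * p, b] = 0` (`compress_commute`).

Here `[a, b] = a * b - b * a`. Only the first point uses triangularity.
-/

set_option synthInstance.maxHeartbeats 1000000
set_option maxHeartbeats 1000000

theorem compress_commutator {R : Type*} [Ring R] (D : R → R)
    (hL : ∀ x y : R, D (x * y - y * x) = D x * y - y * D x + x * D y - D y * x)
    {p a b : R} (pa : p * a = 0) (ap : a * p = 0) (pb : p * b = 0) (bp : b * p = 0) :
    p * D (a * b - b * a) * p = 0 := by
  have h : p * D (a * b - b * a) * p =
      p * D a * (b * p) - (p * b) * D a * p + (p * a) * D b * p - p * D b * (a * p) := by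
    rw [hL]; noncomm_ring
  rw [h, pa, ap, pb, bp]; simp

theorem compress_commute {R : Type*} [Ring R] (D : R → R) (h0 : D 0 = 0)
    (hL : ∀ x y : R, D (x * y - y * x) = D x * y - y * D x + x * D y - D y * x)
    {p a b : R} (pa : p * a = 0) (ap : a * p = 0) (pb : p * b = b) (bp : b * p = b) :
    (p * D a * p) * b = b * (p * D a * p) := by
  have ab : a * b = 0 := by rw [← pb, ← mul_assoc, ap, zero_mul]
  have ba : b * a = 0 := by rw [← bp, mul_assoc, pa, mul_zero]
  have h : p * D (a * b - b * a) * p =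
      p * D a * (b * p) - (p * b) * D a * p + (p * a) * D b * p - p * D b * (a * p) := by
    rw [hL]; noncomm_ring
  rw [ab, ba, sub_zero, h0, pa, ap, pb, bp] at h
  simp only [mul_zero, zero_mul, add_zero, sub_zero] at h
  calc (p * D a * p) * b = p * D a * b := by rw [mul_assoc, pb]
    _ = b * D a * p := (sub_eq_zero.mp h.symm)
    _ = b * (p * D a * p) := by rw [← mul_assoc, ← mul_assoc, bp]

theorem lie_derivation_corner_components
    {K : Type*} [Field K] {Λ : Type*} [Ring Λ] [Algebra K Λ]
    (e : Λ) (he : e * e = e)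
    (htri : ∀ x : Λ, (1 - e) * x * e = 0)
    (Θ : Λ →ₗ[K] Λ)
    (hL : ∀ x y : Λ, Θ (x * y - y * x) = Θ x * y - y * Θ x + x * Θ y - Θ y * x) :
    ∀ x y : Λ,
      (e * Θ (e * x * (1 - e)) * e = 0) ∧
      ((1 - e) * Θ (e * x * (1 - e)) * (1 - e) = 0) ∧
      ((1 - e) * Θ ((e * x * e) * (e * y * e) - (e * y * e) * (e * x * e)) * (1 - e) = 0) ∧
      (e * Θ (((1 - e) * x * (1 - e)) * ((1 - e) * y * (1 - e)) -
          ((1 - e) * y * (1 - e)) * ((1 - e) * x * (1 - e))) * e = 0) ∧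
      (((1 - e) * Θ (e * x * e) * (1 - e)) * ((1 - e) * y * (1 - e)) =
        ((1 - e) * y * (1 - e)) * ((1 - e) * Θ (e * x * e) * (1 - e))) ∧
      ((e * Θ ((1 - e) * x * (1 - e)) * e) * (e * y * e) =
        (e * y * e) * (e * Θ ((1 - e) * x * (1 - e)) * e)) := by
  intro x y
  -- Making `f` opaque keeps the normalisation below from expanding `1 - e`.
  obtain ⟨f, hf⟩ : ∃ f : Λ, f = 1 - e := ⟨_, rfl⟩
  have ef : e * f = 0 := by rw [hf, mul_sub, mul_one, he, sub_self]
  have fe : f * e = 0 := by rw [hf, sub_mul, one_mul, he, sub_self]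
  have ff : f * f = f := by
    nth_rewrite 1 [hf]
    rw [sub_mul, one_mul, ef, sub_zero]
  simp only [← hf] at htri ⊢
  -- A corner element `p * z * p` is fixed by `p` and annihilated by any `q` orthogonal to `p`.
  have fixL : ∀ p z : Λ, p * p = p → p * (p * z * p) = p * z * p := by
    intro p z h
    rw [← mul_assoc, ← mul_assoc, h]
  have fixR : ∀ p z : Λ, p * p = p → (p * z * p) * p = p * z * p := by
    intro p z h
    rw [mul_assoc, h]
  have killL : ∀ q p z : Λ, q * p = 0 → q * (p * z * p) = 0 := by
    intro q p z h
    rw [← mul_assoc, ← mul_assoc, h, zero_mul, zero_mul]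
  have killR : ∀ q p z : Λ, p * q = 0 → (p * z * p) * q = 0 := by
    intro q p z h
    rw [mul_assoc, h, mul_zero]
  have hm : Θ (e * x * f) =
      Θ e * (e * x * f) - (e * x * f) * Θ e + e * Θ (e * x * f) - Θ (e * x * f) * e := by
    rw [← hL, ← mul_assoc, ← mul_assoc, he, mul_assoc (e * x) f e, fe, mul_zero, sub_zero]
  refine ⟨?_, ?_, ?_, ?_, ?_, ?_⟩
  · have h : e * Θ (e * x * f) * e =
        e * Θ e * e * x * (f * e) - (e * e) * x * (f * Θ e * e)
          + (e * e) * Θ (e * x * f) * e - e * Θ (e * x * f) * (e * e) := by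
      nth_rewrite 1 [hm]
      noncomm_ring
    rw [h, fe, htri, he]
    simp
  · have h : f * Θ (e * x * f) * f =
        (f * Θ e * e) * x * f * f - (f * e) * x * f * Θ e * f
          + (f * e) * Θ (e * x * f) * f - f * Θ (e * x * f) * (e * f) := by
      nth_rewrite 1 [hm]
      noncomm_ring
    rw [h, fe, htri, ef]
    simp
  · exact compress_commutator Θ hL (killL _ _ _ fe) (killR _ _ _ ef)
      (killL _ _ _ fe) (killR _ _ _ ef)
  · exact compress_commutator Θ hL (killL _ _ _ ef) (killR _ _ _ fe)
      (killL _ _ _ ef) (killR _ _ _ fe)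
  · exact compress_commute Θ (map_zero Θ) hL (killL _ _ _ fe) (killR _ _ _ ef)
      (fixL _ _ ff) (fixR _ _ ff)
  · exact compress_commute Θ (map_zero Θ) hL (killL _ _ _ ef) (killR _ _ _ fe)
      (fixL _ _ he) (fixR _ _ he)
end

section
/- A K-linear map Θ : T → T is a Lie derivation of the upper triangular matrix algebra T if and only if it is of standard form: there exist a K-linear map D : T → T with D(x*y) = D(x)*y + x*D(y) for all x, y ∈ T (a derivation) and a K-linear map φ : T → K with φ(x*y - y*x) = 0 for all x, y ∈ T, such that Θ(x) = D(x) + φ(x) • 1 for all x ∈ T (where 1 is the identity matrix, which spans the center of T). -/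
/-!
A commutator of upper triangular matrices has zero diagonal, so for a Lie derivation `Θ` the
functional `φ x = (Θ x)₀₀` vanishes on commutators, and `D x = Θ x - φ x • 1` is again a Lie
derivation. It remains to see that `D` is a derivation. Comparing `(i, j)` entries of
`D [E k k, E i j]` shows that the diagonal of each `D (E k k)` is constant
(`UTLie.diag_const`), hence zero by the choice of `φ`. Since the `E k k` commute with one another,
the `D (E k k)` agree with an inner derivation `x ↦ x * a - a * x` on the `E k k`. The difference
`f` kills every `E k k`, so it preserves the joint eigenspaces of their adjoint actions:
`f (E i j)` is a multiple of `E i j` (`UTLie.apply_E`). The multipliers are additive along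
`i ≤ j ≤ k`, which makes `f` a derivation (`UTLie.derivation_of_kills_idempotents`).

The argument works in every characteristic: in characteristic two the adjoint weights alone do not
separate the positions `(i, j)` and `(j, i)`, but only one of the two is upper triangular.
-/

set_option synthInstance.maxHeartbeats 1000000
set_option maxHeartbeats 1000000

namespace UTLie

variable {K : Type*} [Field K] {n : ℕ}

/-- The defining identity of a Lie derivation of the upper triangular algebra. -/
def IsLie (f : UT K n →ₗ[K] UT K n) : Prop :=
  ∀ x y : UT K n, f (x * y - y * x) = f x * y - y * f x + x * f y - f y * x

/-- The matrix unit at position `(i, j)`, as an element of `UT K n`. It is taken to be `0` when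
`j < i`, so that it is defined for all pairs of indices. -/
def E (i j : Fin n) : UT K n :=
  ⟨if i ≤ j then Matrix.single i j 1 else 0, by
    intro p q hpq
    split_ifs with h
    · rw [Matrix.single_apply, if_neg]
      rintro ⟨rfl, rfl⟩
      exact absurd h (not_le.mpr hpq)
    · rfl⟩

lemma low (x : UT K n) {i j : Fin n} (h : j < i) : x.1 i j = 0 := x.2 h

lemma E_apply {k l : Fin n} (h : k ≤ l) (i j : Fin n) :
    (E k l : UT K n).1 i j = if i = k ∧ j = l then 1 else 0 := by
  simp [E, h, Matrix.single_apply, eq_comm]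

lemma E_mul {k l : Fin n} (h : k ≤ l) (x : UT K n) (i j : Fin n) :
    (E k l * x).1 i j = if i = k then x.1 l j else 0 := by
  change ((E k l).1 * x.1 : Matrix (Fin n) (Fin n) K) i j = _
  rw [Matrix.mul_apply]
  by_cases hi : i = k <;> simp [E_apply h, hi]

lemma mul_E {k l : Fin n} (h : k ≤ l) (x : UT K n) (i j : Fin n) :
    (x * E k l).1 i j = if j = l then x.1 i k else 0 := by
  change (x.1 * (E k l).1 : Matrix (Fin n) (Fin n) K) i j = _
  rw [Matrix.mul_apply]
  by_cases hi : j = l <;> simp [E_apply h, hi]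

lemma add_app (x y : UT K n) (i j : Fin n) : (x + y).1 i j = x.1 i j + y.1 i j := rfl

lemma sub_app (x y : UT K n) (i j : Fin n) : (x - y).1 i j = x.1 i j - y.1 i j := rfl

lemma smul_app (c : K) (x : UT K n) (i j : Fin n) : (c • x).1 i j = c * x.1 i j := rfl

lemma ext_entry {x y : UT K n} (h : ∀ i j, i ≤ j → x.1 i j = y.1 i j) : x = y := by
  apply Subtype.ext
  ext i j
  rcases le_or_gt i j with hij | hij
  · exact h i j hij
  · rw [low x hij, low y hij]

lemma mul_diag (x y : UT K n) (i : Fin n) : (x * y).1 i i = x.1 i i * y.1 i i := by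
  change (x.1 * y.1) i i = _
  rw [Matrix.mul_apply]
  apply Finset.sum_eq_single i
  · intro b _ hb
    rcases lt_or_gt_of_ne hb with h | h
    · rw [low x h, zero_mul]
    · rw [low y h, mul_zero]
  · simp

lemma bracket (k : Fin n) {i j : Fin n} (h : i ≤ j) :
    (E k k * E i j - E i j * E k k : UT K n) =
      ((if k = i then 1 else 0) - (if k = j then 1 else 0) : K) • E i j := by
  apply ext_entry
  intro p q _
  rw [sub_app, smul_app, E_mul le_rfl, mul_E le_rfl, E_apply h, E_apply h, E_apply h]
  split_ifs <;> grind

lemma expand (x : UT K n) : x = ∑ i, ∑ j, x.1 i j • E i j := by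
  have h : ((∑ i, ∑ j, x.1 i j • E i j : UT K n)).1 = x.1 := by
    conv_rhs => rw [Matrix.matrix_eq_sum_single x.1]
    rw [← Subalgebra.coe_val, map_sum]
    refine Finset.sum_congr rfl fun i _ => ?_
    rw [map_sum]
    refine Finset.sum_congr rfl fun j _ => ?_
    rw [map_smul, Subalgebra.coe_val]
    rcases le_or_gt i j with hij | hij
    · simp [E, hij]
    · simp [low x hij]
  exact Subtype.ext h.symm

lemma diag_const {g : UT K n →ₗ[K] UT K n} (hg : IsLie g) (k i j : Fin n) (h : i ≤ j) :
    (g (E k k)).1 i i = (g (E k k)).1 j j := by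
  have e := hg (E k k) (E i j)
  rw [bracket k h, map_smul] at e
  have e := congrArg (fun z : UT K n => z.1 i j) e
  simp only [sub_app, add_app, smul_app, E_mul h, mul_E h, E_mul (le_refl k),
    mul_E (le_refl k)] at e
  split_ifs at e <;> grind

/-- A Lie derivation killing the diagonal matrix units scales every matrix unit. -/
lemma apply_E {f : UT K n →ₗ[K] UT K n} (hf : IsLie f) (h0 : ∀ k, f (E k k) = 0)
    {i j : Fin n} (h : i ≤ j) (p q : Fin n) (hpq : p ≤ q) :
    (f (E i j)).1 p q = if p = i ∧ q = j then (f (E i j)).1 i j else 0 := by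
  rcases h.eq_or_lt with rfl | hlt
  · rw [h0]; simp
  have key (k : Fin n) : ((if k = i then 1 else 0) - (if k = j then 1 else 0)) *
      (f (E i j)).1 p q = (if p = k then (f (E i j)).1 k q else 0) -
        (if q = k then (f (E i j)).1 p k else 0) := by
    have e := hf (E k k) (E i j)
    rw [bracket k h, map_smul, h0] at e
    have e := congrArg (fun z : UT K n => z.1 p q) e
    simpa only [sub_app, add_app, smul_app, E_mul (le_refl k), mul_E (le_refl k),
      zero_mul, mul_zero, sub_zero, zero_add] using e
  have e1 := key i
  have e2 := key j
  by_cases hp : p = i <;> by_cases hq : q = j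
  all_goals
    simp only [hlt.ne, hlt.ne', if_true, if_false] at e1 e2
    split_ifs at e1 e2 <;> grind

lemma apply_entry {f : UT K n →ₗ[K] UT K n} (hf : IsLie f) (h0 : ∀ k, f (E k k) = 0)
    (x : UT K n) {p q : Fin n} (hpq : p ≤ q) :
    (f x).1 p q = (f (E p q)).1 p q * x.1 p q := by
  have ent (s : Fin n → Fin n → UT K n) :
      (∑ i, ∑ j, s i j).1 p q = ∑ i, ∑ j, (s i j).1 p q := by
    rw [← Subalgebra.coe_val, map_sum, Matrix.sum_apply]
    refine Finset.sum_congr rfl fun i _ => ?_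
    rw [map_sum, Matrix.sum_apply]
  conv_lhs => rw [expand x]
  simp only [map_sum, map_smul]
  rw [ent]
  rw [Finset.sum_eq_single p, Finset.sum_eq_single q]
  · rw [smul_app, mul_comm]
  · intro j _ hj
    rw [smul_app]
    rcases le_or_gt p j with h | h
    · rw [apply_E hf h0 h p q hpq, if_neg (by grind), mul_zero]
    · rw [low x h, zero_mul]
  · simp
  · intro i _ hi
    refine Finset.sum_eq_zero fun j _ => ?_
    rw [smul_app]
    rcases le_or_gt i j with h | h
    · rw [apply_E hf h0 h p q hpq, if_neg (by grind), mul_zero]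
    · rw [low x h, zero_mul]
  · simp

lemma weight_add {f : UT K n →ₗ[K] UT K n} (hf : IsLie f) (h0 : ∀ k, f (E k k) = 0)
    {i j k : Fin n} (hij : i ≤ j) (hjk : j ≤ k) :
    (f (E i k)).1 i k = (f (E i j)).1 i j + (f (E j k)).1 j k := by
  rcases hij.eq_or_lt with rfl | hij'
  · simp [h0]
  rcases hjk.eq_or_lt with rfl | hjk'
  · simp [h0]
  have hik := hij'.trans hjk'
  have b : (E i j * E j k - E j k * E i j : UT K n) = E i k := by
    apply ext_entry
    intro p q _
    rw [sub_app, E_mul hij, E_mul hjk, E_apply hjk, E_apply hij, E_apply hik.le]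
    split_ifs <;> grind
  have e := hf (E i j) (E j k)
  rw [b] at e
  have e := congrArg (fun z : UT K n => z.1 i k) e
  simpa [sub_app, add_app, E_mul hij, E_mul hjk, mul_E hij, mul_E hjk, hij'.ne, hjk'.ne'] using e

lemma derivation_of_kills_idempotents {f : UT K n →ₗ[K] UT K n} (hf : IsLie f)
    (h0 : ∀ k, f (E k k) = 0) (x y : UT K n) : f (x * y) = f x * y + x * f y := by
  apply ext_entry
  intro i k hik
  rw [apply_entry hf h0 _ hik, add_app]
  change _ * (x.1 * y.1) i k = ((f x).1 * y.1) i k + (x.1 * (f y).1) i k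
  simp only [Matrix.mul_apply]
  rw [Finset.mul_sum, ← Finset.sum_add_distrib]
  refine Finset.sum_congr rfl fun j _ => ?_
  rcases lt_or_ge j i with h | hij
  · simp [low x h, low (f x) h]
  rcases lt_or_ge k j with h | hjk
  · simp [low y h, low (f y) h]
  rw [apply_entry hf h0 x hij, apply_entry hf h0 y hjk, weight_add hf h0 hij hjk]
  ring

/-- A Lie derivation whose values on the diagonal matrix units have zero diagonal is a derivation:
it differs from an inner derivation by a map killing those units. -/
lemma derivation_of_diag_zero {D : UT K n →ₗ[K] UT K n} (hD : IsLie D)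
    (hd : ∀ k i, (D (E k k)).1 i i = 0) (x y : UT K n) : D (x * y) = D x * y + x * D y := by
  -- For `i < j` the entry is forced by `(D (E j j)) i j = (E j j * a - a * E j j) i j = -a i j`.
  obtain ⟨a, ha⟩ : ∃ a : UT K n, ∀ i j, a.1 i j = -(D (E j j)).1 i j :=
    ⟨⟨Matrix.of fun i j => -(D (E j j)).1 i j, fun i j hij => by
      rw [Matrix.of_apply, low (D (E j j)) (show j < i from hij), neg_zero]⟩, fun i j => rfl⟩
  let f : UT K n →ₗ[K] UT K n := D - (LinearMap.mulRight K a - LinearMap.mulLeft K a)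
  have fx (z : UT K n) : f z = D z - (z * a - a * z) := rfl
  have hf : IsLie f := by
    intro u v
    rw [fx, fx, fx, hD u v]
    simp only [mul_sub, sub_mul, mul_assoc]
    abel
  have h0 (k : Fin n) : f (E k k) = 0 := by
    apply ext_entry
    intro i j hij
    change (f (E k k)).1 i j = 0
    rw [fx, sub_app, sub_app, E_mul le_rfl, mul_E le_rfl, ha, ha]
    rcases hij.eq_or_lt with rfl | hlt
    · have := hd k i
      split_ifs <;> grind
    · have e := hD (E k k) (E j j)
      have c : (E k k * E j j - E j j * E k k : UT K n) = 0 := by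
        rw [bracket k le_rfl, sub_self, zero_smul]
      rw [c, map_zero] at e
      have e := congrArg (fun z : UT K n => z.1 i j) e
      simp only [sub_app, add_app, E_mul (le_refl k), mul_E (le_refl k), E_mul (le_refl j),
        mul_E (le_refl j)] at e
      change (0 : K) = _ at e
      split_ifs at e ⊢ <;> grind
  have h := derivation_of_kills_idempotents hf h0 x y
  rw [fx, fx, fx] at h
  rw [sub_eq_iff_eq_add] at h
  rw [h]
  simp only [mul_sub, sub_mul, mul_assoc]
  abel

end UTLie

theorem lie_derivation_upper_triangular_iff_standard_form
    {K : Type*} [Field K] {n : ℕ} (hn : 0 < n)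
    (Θ : UT K n →ₗ[K] UT K n) :
    (∀ x y : UT K n, Θ (x * y - y * x) = Θ x * y - y * Θ x + x * Θ y - Θ y * x) ↔
    ∃ (D : UT K n →ₗ[K] UT K n) (φ : UT K n →ₗ[K] K),
      (∀ x y : UT K n, D (x * y) = D x * y + x * D y) ∧
      (∀ x y : UT K n, φ (x * y - y * x) = 0) ∧
      (∀ x : UT K n, Θ x = D x + φ x • 1) := by
  constructor
  · intro hΘ
    let o : Fin n := ⟨0, hn⟩
    let φ : UT K n →ₗ[K] K :=
      { toFun := fun x => (Θ x).1 o o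
        map_add' := fun x y => by rw [map_add]; rfl
        map_smul' := fun c x => by rw [map_smul]; rfl }
    have hφ (x : UT K n) : φ x = (Θ x).1 o o := rfl
    have hφ0 (x y : UT K n) : φ (x * y - y * x) = 0 := by
      rw [hφ, hΘ]
      simp only [UTLie.sub_app, UTLie.add_app, UTLie.mul_diag]
      ring
    let D : UT K n →ₗ[K] UT K n := Θ - φ.smulRight 1
    have Dx (x : UT K n) : D x = Θ x - φ x • 1 := rfl
    have hD : UTLie.IsLie D := by
      intro x y
      rw [Dx, Dx, Dx, hφ0, hΘ]
      simp only [sub_mul, mul_sub, smul_mul_assoc, mul_smul_comm, one_mul, mul_one, zero_smul]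
      abel
    refine ⟨D, φ, UTLie.derivation_of_diag_zero hD ?_, hφ0, fun x => by rw [Dx]; abel⟩
    intro k i
    rw [← UTLie.diag_const hD k o i (Nat.zero_le _), Dx, UTLie.sub_app, UTLie.smul_app, hφ]
    have : (1 : UT K n).1 o o = 1 := Matrix.one_apply_eq o
    rw [this]
    ring
  · rintro ⟨D, φ, hD, hφ, h⟩ x y
    rw [h, h, h, hφ, map_sub, hD, hD]
    simp only [add_mul, mul_add, smul_mul_assoc, mul_smul_comm, one_mul, mul_one, zero_smul]
    abel
end

section
/- Suppose char K ≠ 2. If F, d : T → T are K-linear maps such that F(x*y + y*x) = F(x)*y + y*F(x) + x*d(y) + d(y)*x for all x, y ∈ T (F is a Jordan generalized derivation of T with associated map d), then F(1) is central in T: F(1)*x = x*F(1) for all x ∈ T; equivalently, there exists k ∈ K with F(1) = k • 1. -/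
/-!
Write `a = F 1`. Since `2` is invertible, taking `x = y = 1` gives `d 1 = 0`, and then taking
`x = 1` gives `2 F y = a y + y a + 2 d y`. For an idempotent `e`, the identity with `x = y = e`
reads `2 F e = F e * e + e * F e + e * d e + d e * e`; multiplying it by `e` on either side shows
that `e` commutes with `F e - d e`, hence with `a e + e a`, and therefore with `a`
(`commute_of_idempotent`). The algebra of upper triangular matrices is spanned by idempotents: the
matrix units `E i i`, together with the differences `E i j = (E i i + E i j) - E i i` for `i < j`.
So `a` commutes with all of the units `E i j` with `i ≤ j`, which forces it to be scalar
(`eq_smul_one_of_commute_single`).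
-/

set_option synthInstance.maxHeartbeats 1000000
set_option maxHeartbeats 1000000

/-- The case of a single idempotent `e`, with `u = F e` and `v = d e`. -/
lemma commute_of_idempotent {R : Type*} [Ring R]
    {a e u v : R} (he : e * e = e)
    (h : u + u = u * e + e * u + e * v + v * e)
    (ha : u + u = a * e + e * a + v + v) : a * e = e * a := by
  have hl : e * u - e * v = e * u * e + e * v * e := by
    have := congrArg (e * ·) h
    simp only [mul_add, ← mul_assoc, he] at this
    rw [← sub_eq_zero] at this ⊢; rw [← this]; abel
  have hr : u * e - v * e = e * u * e + e * v * e := by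
    have := congrArg (· * e) h
    simp only [add_mul, mul_assoc, he] at this
    simp only [mul_assoc]
    rw [← sub_eq_zero] at this ⊢; rw [← this]; abel
  have hc : e * u - e * v = u * e - v * e := hl.trans hr.symm
  have h1 := congrArg (e * ·) ha
  have h3 := congrArg (· * e) ha
  simp only [mul_add, ← mul_assoc, he] at h1
  simp only [add_mul, mul_assoc, he] at h3
  simp only [mul_assoc] at h1
  rw [← sub_eq_zero] at hc h1 h3 ⊢
  have := congrArg₂ (· - ·) (congrArg₂ (· - ·) h1 h3) (congrArg₂ (· + ·) hc hc)
  simp only [sub_zero, add_zero] at this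
  rw [← this]
  abel

/-- A matrix commuting with the matrix units `E i j`, `i ≤ j`, is scalar. -/
lemma eq_smul_one_of_commute_single {K : Type*} [Field K] {n : ℕ} (hn : 0 < n)
    (A : Matrix (Fin n) (Fin n) K)
    (hA : ∀ i j : Fin n, i ≤ j → A * Matrix.single i j 1 = Matrix.single i j 1 * A) :
    A = A ⟨0, hn⟩ ⟨0, hn⟩ • (1 : Matrix (Fin n) (Fin n) K) := by
  ext i j
  by_cases hij : i = j
  · subst hij
    have := congrFun (congrFun (hA ⟨0, hn⟩ i (Nat.zero_le _)) ⟨0, hn⟩) i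
    simpa using this.symm
  · have := congrFun (congrFun (hA i i le_rfl) i) j
    rw [Matrix.mul_single_apply_of_ne _ _ _ _ _ (Ne.symm hij)] at this
    simpa [hij] using this.symm

lemma single_mem_UT {K : Type*} [Field K] {n : ℕ} {i j : Fin n} (hij : i ≤ j) :
    Matrix.single i j (1 : K) ∈ UT K n := by
  intro k l hkl
  rw [Matrix.single_apply, if_neg]
  rintro ⟨rfl, rfl⟩
  exact absurd hkl (not_lt.mpr hij)

theorem jordan_generalized_derivation_one_central
    {K : Type*} [Field K] {n : ℕ} (hn : 0 < n)
    (hchar : ringChar K ≠ 2)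
    (F d : UT K n →ₗ[K] UT K n)
    (hF : ∀ x y : UT K n, F (x * y + y * x) = F x * y + y * F x + x * d y + d y * x) :
    (∀ x : UT K n, F 1 * x = x * F 1) ∧ (∃ k : K, F 1 = k • 1) := by
  have h2 : (2 : K) ≠ 0 := Ring.two_ne_zero hchar
  have htwo : ∀ r : UT K n, r + r = 0 → r = 0 := fun r hr => by
    rw [← two_smul K] at hr
    exact (smul_eq_zero.mp hr).resolve_left h2
  have hd : d 1 = 0 := by
    have h := hF 1 1
    simp only [mul_one, one_mul, map_add, add_assoc] at h
    exact htwo _ (by simpa using h)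
  have hidem : ∀ e : UT K n, e * e = e → F 1 * e = e * F 1 := fun e he => by
    refine commute_of_idempotent he (u := F e) (v := d e) ?_ ?_
    · simpa [he] using hF e e
    · have h := hF 1 e
      simp only [mul_one, one_mul, map_add] at h
      simpa [hd] using h
  have hunit : ∀ e : Matrix (Fin n) (Fin n) K, e ∈ UT K n → e * e = e →
      (F 1 : Matrix (Fin n) (Fin n) K) * e = e * (F 1 : Matrix (Fin n) (Fin n) K) :=
    fun e hmem he => congrArg Subtype.val (hidem ⟨e, hmem⟩ (Subtype.ext he))
  have hdiag : ∀ i : Fin n, (F 1 : Matrix (Fin n) (Fin n) K) * Matrix.single i i 1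
      = Matrix.single i i 1 * (F 1 : Matrix (Fin n) (Fin n) K) := fun i =>
    hunit _ (single_mem_UT le_rfl) (by simp)
  have hk : F 1 = (F 1 : Matrix (Fin n) (Fin n) K) ⟨0, hn⟩ ⟨0, hn⟩ • (1 : UT K n) := by
    refine Subtype.ext (eq_smul_one_of_commute_single hn _ fun i j hij => ?_)
    rcases hij.eq_or_lt with rfl | hlt
    · exact hdiag i
    · have h := hunit (Matrix.single i i 1 + Matrix.single i j 1)
        (add_mem (single_mem_UT le_rfl) (single_mem_UT hij))
        (by simp [mul_add, add_mul, Matrix.single_mul_single_of_ne, hlt.ne'])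
      rw [mul_add, add_mul, hdiag i] at h
      exact add_left_cancel h
  refine ⟨fun x => ?_, _, hk⟩
  rw [hk]
  simp
end
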